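/- The well-poised hypergeometric value ₇F₆(1/2, 5/4, 1/2, 1/2, 1/2, 1/2, 1/2; 1/4, 1, 1, 1, 1, 1; 1) = ∑_{k=0}^∞ (1+4k) ((1/2)_k / k!)⁶ equals (32i/π) times the integral of τ · η(τ)⁴ η(2τ)⁴ dτ along the straight segment in the upper half-plane from τ = (1+i)/2 to τ = (−1+i)/2; that is, ∑_{k=0}^∞ (1+4k)((1/2)_k / k!)⁶ = −(32i/π) ∫_{−1/2}^{1/2} (t + i/2) · η(t+i/2)⁴ η(2t+i)⁴ dt. (Here η(τ)⁴η(2τ)⁴ is the eta-product expression for the weight-4 newform f_{8.4.a.a} evaluated at τ/2, since f_{8.4.a.a}(τ) = η(2τ)⁴η(4τ)⁴.) -/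

import Mathlib

open Complex Real

/-- The Pochhammer symbol `(a)ₖ = a(a+1)⋯(a+k−1)`. -/
noncomputable def poch (a : ℂ) (k : ℕ) : ℂ := ∏ i ∈ Finset.range k, (a + i)

/-- The generalized hypergeometric series
`ₙFₙ₋₁(a₁,…,aₙ; b₂,…,bₙ; z) = ∑ₖ (a₁)ₖ⋯(aₙ)ₖ / ((1)ₖ(b₂)ₖ⋯(bₙ)ₖ) · zᵏ`. -/
noncomputable def hypF (upper lower : List ℂ) (z : ℂ) : ℂ :=
  ∑' k : ℕ, (upper.map fun a => poch a k).prod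
    / (poch 1 k * (lower.map fun b => poch b k).prod) * z ^ k

/-- The Dedekind eta function `η(τ) = e^{πiτ/12} ∏ₙ (1 − e^{2πinτ})` on the upper
half-plane (as a function on all of `ℂ`). -/
noncomputable def dedekindEta (τ : ℂ) : ℂ :=
  Complex.exp (Real.pi * Complex.I * τ / 12)
    * ∏' n : ℕ, (1 - Complex.exp (2 * Real.pi * Complex.I * ((n : ℂ) + 1) * τ))

/-!
The function `K'(x) = ∫ₓ¹ ds / √((1 - s²)(s² - x²))` has the even moments `(π²/4) ((1/2)ₙ / n!)²` on
`[0, 1]`. Hence, by the Pfaff–Saalschütz sum, its coefficients in the Hilbert basis of even Legendre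
polynomials are again such Pochhammer quotients, and Parseval's identity turns the series into
`∫₀¹ K'(x)² dx`.

Under `x = θ₄(q)² / θ₃(q)²` Gauss's arithmetic-geometric mean gives `K'(x) = (π/2) θ₃(q)²`, and
`q = exp (-π y)` turns `K'(x)² dx` into a multiple of `η(iy)⁴ η(2iy)⁴ dy`. The theta identities this
needs compare functions of `q` with their values at `q²`: a function unchanged by `q ↦ q²` equals
its limit at `q = 0`.

It remains to move the integral of the eta product from the imaginary axis to the segment. The eta
product `g` satisfies `g(τ + 1) = -g(τ)` and `g(-1 / (2τ)) = 4 τ⁴ g(τ)`, and the end points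
`(±1 + i) / 2` of the segment are exchanged by both `τ ↦ -1 / (2τ)` and a unit translation; so they
link primitives of `g(τ)`, `τ g(τ)` and `τ² g(τ)` at these two points.
-/

open Asymptotics Filter MeasureTheory Set Topology

section Primitives

theorem isExactOn_of_comp {f φ φ' ψ ψ' : ℂ → ℂ} {U V : Set ℂ} (hφ : MapsTo φ U V)
    (hφ' : ∀ z ∈ U, HasDerivAt φ (φ' z) z) (hψφ : ∀ z ∈ U, ψ (φ z) = z)
    (hψ'φ : ∀ z ∈ U, ψ' (φ z) * φ' z = 1)
    (h : IsExactOn (fun w => f (ψ w) * ψ' w) V) : IsExactOn f U := by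
  obtain ⟨F, hF⟩ := h
  refine ⟨F ∘ φ, fun z hz => ((hF _ (hφ hz)).comp z (hφ' z hz)).congr_deriv ?_⟩
  rw [mul_assoc, hψ'φ z hz, hψφ z hz, mul_one]

theorem im_cayley_symm_pos {w : ℂ} (hw : w ∈ Metric.ball (0 : ℂ) 1) :
    0 < (I * (1 + w) / (1 - w)).im := by
  have hw1 : ‖w‖ < 1 := by simpa using hw
  have hne : 1 - w ≠ 0 := fun h => by simp [← sub_eq_zero.1 h] at hw1
  have him : (I * (1 + w) / (1 - w)).im = (1 - normSq w) / normSq (1 - w) := by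
    rw [Complex.div_im]
    simp only [normSq_apply, mul_re, mul_im, add_re, add_im, sub_re, sub_im, one_re, one_im,
      I_re, I_im]
    ring
  have hw2 : normSq w < 1 := by
    rw [normSq_eq_norm_sq]
    exact pow_lt_one₀ (norm_nonneg w) hw1 two_ne_zero
  rw [him]
  exact div_pos (sub_pos.2 hw2) (normSq_pos.2 hne)

theorem norm_cayley_lt_one {z : ℂ} (hz : 0 < z.im) : ‖(z - I) / (z + I)‖ < 1 := by
  have hlt : normSq (z - I) < normSq (z + I) := by
    simp only [normSq_apply, sub_re, sub_im, add_re, add_im, I_re, I_im]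
    nlinarith
  have hpos : 0 < ‖z + I‖ := norm_pos_iff.2 fun h => by
    simp only [h, map_zero] at hlt
    exact (normSq_nonneg _).not_gt hlt
  rw [norm_div, div_lt_one hpos, ← sq_lt_sq₀ (norm_nonneg _) hpos.le]
  simpa only [normSq_eq_norm_sq] using hlt

theorem isExactOn_upperHalfPlaneSet {f : ℂ → ℂ}
    (hf : DifferentiableOn ℂ f UpperHalfPlane.upperHalfPlaneSet) :
    IsExactOn f UpperHalfPlane.upperHalfPlaneSet := by
  have hne : ∀ z ∈ UpperHalfPlane.upperHalfPlaneSet, z + I ≠ 0 := fun z hz h => by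
    have him : z.im + 1 = 0 := by simpa using congrArg Complex.im h
    have hz0 : 0 < z.im := hz
    linarith
  have hone : ∀ z ∈ UpperHalfPlane.upperHalfPlaneSet,
      1 - (z - I) / (z + I) = 2 * I / (z + I) := fun z hz => by
    have := hne z hz
    field_simp
    ring
  refine isExactOn_of_comp (φ := fun z => (z - I) / (z + I)) (φ' := fun z => 2 * I / (z + I) ^ 2)
    (ψ := fun w => I * (1 + w) / (1 - w)) (ψ' := fun w => 2 * I / (1 - w) ^ 2)
    (V := Metric.ball 0 1) (fun z hz => mem_ball_zero_iff.2 (norm_cayley_lt_one hz))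
    (fun z hz => ?_) (fun z hz => ?_) (fun z hz => ?_) (DifferentiableOn.isExactOn_ball ?_)
  · refine (((hasDerivAt_id' z).sub_const I).div ((hasDerivAt_id' z).add_const I)
      (hne z hz)).congr_deriv ?_
    ring
  · have := hne z hz
    simp only [hone z hz]
    field_simp
    ring
  · have := hne z hz
    simp only [hone z hz]
    field_simp
  · have hden : ∀ w ∈ Metric.ball (0 : ℂ) 1, 1 - w ≠ 0 := fun w hw h => by
      simp [← sub_eq_zero.1 h] at hw
    refine (hf.comp (DifferentiableOn.div (by fun_prop) (by fun_prop) hden)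
      fun w hw => im_cayley_symm_pos hw).mul ?_
    exact DifferentiableOn.div (by fun_prop) (by fun_prop) fun w hw => pow_ne_zero 2 (hden w hw)

theorem eq_of_hasDerivAt_zero_upperHalfPlaneSet {F : ℂ → ℂ}
    (hF : ∀ z : ℂ, 0 < z.im → HasDerivAt F 0 z) {z w : ℂ} (hz : 0 < z.im) (hw : 0 < w.im) :
    F z = F w :=
  UpperHalfPlane.isOpen_upperHalfPlaneSet.is_const_of_deriv_eq_zero
    (convex_halfSpace_im_gt 0).isPreconnected
    (fun z hz => (hF z hz).differentiableAt.differentiableWithinAt)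
    (fun z hz => (hF z hz).deriv) hz hw

theorem tendsto_sub_of_hasDerivAt_of_norm_le {F f : ℂ → ℂ} {b : ℝ → ℝ}
    (hF : ∀ z : ℂ, 0 < z.im → HasDerivAt F (f z) z) (hb : Tendsto b atTop (𝓝 0))
    (hf : ∀ᶠ v : ℝ in atTop, ∀ t ∈ Icc (0 : ℝ) 1, ‖f (v * I + t)‖ ≤ b v) :
    Tendsto (fun v : ℝ => F (v * I + 1) - F (v * I)) atTop (𝓝 0) := by
  refine squeeze_zero_norm' ?_ hb
  filter_upwards [hf, eventually_gt_atTop 0] with v hv hv0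
  have hseg : ∀ z ∈ segment ℝ ((v : ℂ) * I) (v * I + 1), ∃ t ∈ Icc (0 : ℝ) 1, v * I + t = z := by
    intro z hz
    rw [segment_eq_image'] at hz
    simpa using hz
  have hbound := (convex_segment _ _).norm_image_sub_le_of_norm_hasDerivWithin_le
    (f := F) (f' := f) (C := b v) (fun z hz => ?_) (fun z hz => ?_)
    (left_mem_segment ℝ ((v : ℂ) * I) (v * I + 1)) (right_mem_segment _ _ _)
  · simpa using hbound
  · obtain ⟨t, -, rfl⟩ := hseg z hz
    exact (hF _ (by simpa using hv0)).hasDerivWithinAt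
  · obtain ⟨t, ht, rfl⟩ := hseg z hz
    exact hv t ht

end Primitives

section Inversion

theorem hasDerivAt_sq_div (c : ℝ) {v : ℝ} (hv : v ≠ 0) :
    HasDerivAt (fun v => c ^ 2 / v) (-(c ^ 2 / v ^ 2)) v := by
  simpa [div_eq_mul_inv] using (hasDerivAt_inv hv).const_mul (c ^ 2)

theorem image_sq_div_Ioi {c : ℝ} (hc : 0 < c) : (fun v => c ^ 2 / v) '' Ioi c = Ioo 0 c := by
  have hinv : ∀ v, c ^ 2 / (c ^ 2 / v) = v := fun v => div_div_cancel₀ (by positivity)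
  ext x
  simp only [mem_image, mem_Ioi, mem_Ioo]
  constructor
  · rintro ⟨v, hv, rfl⟩
    have hv0 := hc.trans hv
    exact ⟨by positivity, (div_lt_iff₀ hv0).2 (by nlinarith)⟩
  · rintro ⟨hx0, hxc⟩
    exact ⟨c ^ 2 / x, (lt_div_iff₀ hx0).2 (by nlinarith), hinv x⟩

theorem antitoneOn_sq_div {c : ℝ} (hc : 0 < c) : AntitoneOn (fun v => c ^ 2 / v) (Ioi c) :=
  fun _ hx _ _ hxy => div_le_div_of_nonneg_left (sq_nonneg c) (hc.trans hx) hxy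

variable {E : Type*} [NormedAddCommGroup E] [NormedSpace ℝ E]

theorem integrableOn_Ioo_iff_inversion {c : ℝ} (hc : 0 < c) (f : ℝ → E) :
    IntegrableOn f (Ioo 0 c) ↔ IntegrableOn (fun v => (c ^ 2 / v ^ 2) • f (c ^ 2 / v)) (Ioi c) := by
  simpa only [image_sq_div_Ioi hc, neg_neg] using
    integrableOn_image_iff_integrableOn_deriv_smul_of_antitoneOn measurableSet_Ioi
      (fun v hv => (hasDerivAt_sq_div c (hc.trans hv).ne').hasDerivWithinAt)
      (antitoneOn_sq_div hc) f

theorem integral_Ioo_eq_integral_inversion {c : ℝ} (hc : 0 < c) (f : ℝ → E) :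
    ∫ v in Ioo 0 c, f v = ∫ v in Ioi c, (c ^ 2 / v ^ 2) • f (c ^ 2 / v) := by
  simpa only [image_sq_div_Ioi hc, neg_neg] using
    integral_image_eq_integral_deriv_smul_of_antitoneOn measurableSet_Ioi
      (fun v hv => (hasDerivAt_sq_div c (hc.trans hv).ne').hasDerivWithinAt)
      (antitoneOn_sq_div hc) f

end Inversion

section Contour

theorem norm_one_sub_mul_le (g : ℂ → ℂ) (z : ℂ) :
    ‖(1 - 2 * z ^ 2) * g z‖ ≤ (1 + 2 * ‖z‖ ^ 2) * ‖g z‖ := by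
  rw [norm_mul]
  gcongr
  exact (norm_sub_le _ _).trans (by simp)

theorem norm_id_mul_le (g : ℂ → ℂ) (z : ℂ) : ‖z * g z‖ ≤ (1 + 2 * ‖z‖ ^ 2) * ‖g z‖ := by
  rw [norm_mul]
  gcongr
  nlinarith [sq_nonneg (‖z‖ - 1)]

theorem im_neg_one_div_two_mul_pos {z : ℂ} (hz : 0 < z.im) : 0 < (-1 / (2 * z)).im := by
  have hz0 : z ≠ 0 := fun h => by simp [h] at hz
  rw [show -1 / (2 * z) = ((1 / 2 : ℝ) : ℂ) * -z⁻¹ by push_cast; field_simp, im_ofReal_mul,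
    neg_im, inv_im, neg_div, neg_neg]
  have := normSq_pos.2 hz0
  positivity

/-- Holomorphic functions on the upper half-plane that change sign under `z ↦ z + 1`, are fixed by
the Fricke involution `z ↦ -1 / (2 * z)` acting in weight `4`, and decay exponentially at `i∞`. The
bound is only asked for `1 / 2 ≤ z.im`, since such a function need not be bounded near the real
axis. -/
structure IsFrickeForm (g : ℂ → ℂ) : Prop where
  differentiableAt : ∀ z, 0 < z.im → DifferentiableAt ℂ g z
  add_one : ∀ z, 0 < z.im → g (z + 1) = -g z
  fricke : ∀ z, 0 < z.im → g (-1 / (2 * z)) = 4 * z ^ 4 * g z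
  exists_norm_le : ∃ C c : ℝ, 0 < c ∧ ∀ z, 1 / 2 ≤ z.im → ‖g z‖ ≤ C * rexp (-c * z.im)

namespace IsFrickeForm

variable {g : ℂ → ℂ}

theorem exists_norm_le_of_norm_le_mul (hg : IsFrickeForm g) {f : ℂ → ℂ}
    (hf : ∀ z, 0 < z.im → ‖f z‖ ≤ (1 + 2 * ‖z‖ ^ 2) * ‖g z‖) :
    ∃ C c : ℝ, 0 < c ∧ ∀ v : ℝ, 1 ≤ v → ∀ t ∈ Icc (0 : ℝ) 1,
      ‖f (v * I + t)‖ ≤ C * rexp (-c * v) := by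
  obtain ⟨C, c, hc, hC⟩ := hg.exists_norm_le
  refine ⟨72 / c ^ 2 * C, c / 2, half_pos hc, fun v hv t ht => ?_⟩
  have him : ((v : ℂ) * I + t).im = v := by simp
  have hnorm : ‖(v : ℂ) * I + t‖ ≤ v + 1 := by
    refine (norm_add_le _ _).trans (add_le_add ?_ ?_)
    · simp [abs_of_pos (one_pos.trans_le hv)]
    · simpa [abs_of_nonneg ht.1] using ht.2
  have hsq : v ^ 2 ≤ 8 / c ^ 2 * rexp (c / 2 * v) := by
    have := Real.quadratic_le_exp_of_nonneg (x := c / 2 * v) (by positivity)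
    rw [div_mul_eq_mul_div, le_div_iff₀ (by positivity)]
    nlinarith [show 0 < c * v by positivity]
  have hpoly : 1 + 2 * ‖(v : ℂ) * I + t‖ ^ 2 ≤ 72 / c ^ 2 * rexp (c / 2 * v) := by
    calc 1 + 2 * ‖(v : ℂ) * I + t‖ ^ 2 ≤ 1 + 2 * (v + 1) ^ 2 := by gcongr
      _ ≤ 9 * v ^ 2 := by nlinarith
      _ ≤ 9 * (8 / c ^ 2 * rexp (c / 2 * v)) := by gcongr
      _ = 72 / c ^ 2 * rexp (c / 2 * v) := by ring
  have hgv := hC (v * I + t) (by rw [him]; linarith)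
  rw [him] at hgv
  calc ‖f (v * I + t)‖
      ≤ (1 + 2 * ‖(v : ℂ) * I + t‖ ^ 2) * ‖g (v * I + t)‖ := hf _ (by rw [him]; linarith)
    _ ≤ 72 / c ^ 2 * rexp (c / 2 * v) * (C * rexp (-c * v)) := by gcongr
    _ = 72 / c ^ 2 * C * (rexp (c / 2 * v) * rexp (-c * v)) := by ring
    _ = 72 / c ^ 2 * C * rexp (-(c / 2) * v) := by
      rw [← Real.exp_add, show c / 2 * v + -c * v = -(c / 2) * v by ring]

theorem tendsto_primitive_sub (hg : IsFrickeForm g) {F f : ℂ → ℂ}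
    (hf : ∀ z, 0 < z.im → ‖f z‖ ≤ (1 + 2 * ‖z‖ ^ 2) * ‖g z‖)
    (hF : ∀ z : ℂ, 0 < z.im → HasDerivAt F (f z) z) :
    Tendsto (fun v : ℝ => F (v * I + 1) - F (v * I)) atTop (𝓝 0) := by
  obtain ⟨C, c, hc, hC⟩ := hg.exists_norm_le_of_norm_le_mul hf
  refine tendsto_sub_of_hasDerivAt_of_norm_le hF (b := fun v => C * rexp (-c * v)) ?_
    ((eventually_ge_atTop 1).mono hC)
  have hlin : Tendsto (fun v : ℝ => -c * v) atTop atBot :=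
    tendsto_id.const_mul_atTop_of_neg (neg_neg_of_pos hc)
  simpa using (Real.tendsto_exp_atBot.comp hlin).const_mul C

theorem integrableOn_Ioi (hg : IsFrickeForm g) {f : ℂ → ℂ}
    (hf : ∀ z, 0 < z.im → ‖f z‖ ≤ (1 + 2 * ‖z‖ ^ 2) * ‖g z‖)
    (hcont : ∀ z, 0 < z.im → ContinuousAt f z) {a : ℝ} (ha : 0 < a) :
    IntegrableOn (fun v : ℝ => f (v * I)) (Ioi a) := by
  obtain ⟨C, c, hc, hC⟩ := hg.exists_norm_le_of_norm_le_mul hf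
  have hfc : ContinuousOn (fun v : ℝ => f (v * I)) (Ici a) := fun v hv => by
    have hv0 : 0 < v := ha.trans_le hv
    exact (ContinuousAt.comp (f := fun v : ℝ => (v : ℂ) * I) (hcont _ (by simpa using hv0))
      (by fun_prop)).continuousWithinAt
  have hO : (fun v : ℝ => f (v * I)) =O[atTop] fun v => rexp (-c * v) := by
    refine IsBigO.of_bound C ?_
    filter_upwards [eventually_ge_atTop 1] with v hv
    simpa using hC v hv 0 (by simp)
  exact integrableOn_Ici_iff_integrableOn_Ioi (by finiteness) |>.1 <|
    (hfc.locallyIntegrableOn measurableSet_Ici).integrableOn_of_isBigO_atTop hO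
      ⟨Ioi c, Ioi_mem_atTop c, exp_neg_integrableOn_Ioi c hc⟩

theorem inversion_smul (hg : IsFrickeForm g) {v : ℝ} (hv : 0 < v) :
    (√(1 / 2) ^ 2 / v ^ 2) • g (((√(1 / 2) ^ 2 / v : ℝ) : ℂ) * I)
      = 2 * (v : ℂ) ^ 2 * g (v * I) := by
  have hv' : (v : ℂ) ≠ 0 := mod_cast hv.ne'
  have harg : ((1 / 2 / v : ℝ) : ℂ) * I = -1 / (2 * (v * I)) := by
    push_cast
    field_simp
    exact I_sq
  rw [Real.sq_sqrt (by norm_num), harg, hg.fricke _ (by simpa using hv), real_smul, mul_pow,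
    I_pow_four]
  push_cast
  field_simp
  norm_num

theorem integrableOn_Ioi_sqrt (hg : IsFrickeForm g) :
    IntegrableOn (fun v : ℝ => (1 + 2 * (v : ℂ) ^ 2) * g (v * I)) (Ioi √(1 / 2)) := by
  refine (hg.integrableOn_Ioi (fun z _ => norm_one_sub_mul_le g z)
    (fun z hz => ContinuousAt.mul (by fun_prop) (hg.differentiableAt z hz).continuousAt)
    (by positivity)).congr (.of_forall fun v => ?_)
  simp only [mul_pow, I_sq]
  ring

theorem integrableOn_Ioi_sqrt_self (hg : IsFrickeForm g) :
    IntegrableOn (fun v : ℝ => g (v * I)) (Ioi √(1 / 2)) :=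
  hg.integrableOn_Ioi (fun z _ => le_mul_of_one_le_left (norm_nonneg _) (by nlinarith))
    (fun z hz => (hg.differentiableAt z hz).continuousAt) (by positivity)

theorem integrableOn_Ioi_sqrt_sq_mul (hg : IsFrickeForm g) :
    IntegrableOn (fun v : ℝ => 2 * (v : ℂ) ^ 2 * g (v * I)) (Ioi √(1 / 2)) := by
  refine (hg.integrableOn_Ioi_sqrt.sub hg.integrableOn_Ioi_sqrt_self).congr
    (.of_forall fun v => ?_)
  simp only [Pi.sub_apply]
  ring

theorem integrableOn_Ioc_sqrt (hg : IsFrickeForm g) :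
    IntegrableOn (fun v : ℝ => g (v * I)) (Ioc 0 √(1 / 2)) := by
  have hc : 0 < √(1 / 2 : ℝ) := by positivity
  exact (integrableOn_Ioc_iff_integrableOn_Ioo).2 ((integrableOn_Ioo_iff_inversion hc _).2
    (hg.integrableOn_Ioi_sqrt_sq_mul.congr_fun
      (fun v hv => (hg.inversion_smul (hc.trans hv)).symm) measurableSet_Ioi))

theorem integrableOn_imaginary_axis (hg : IsFrickeForm g) :
    IntegrableOn (fun v : ℝ => g (v * I)) (Ioi 0) := by
  rw [← Ioc_union_Ioi_eq_Ioi (Real.sqrt_nonneg (1 / 2))]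
  exact hg.integrableOn_Ioc_sqrt.union hg.integrableOn_Ioi_sqrt_self

theorem integral_Ioi (hg : IsFrickeForm g) :
    ∫ v in Ioi (0 : ℝ), g (v * I)
      = ∫ v in Ioi √(1 / 2), (1 + 2 * (v : ℂ) ^ 2) * g (v * I) := by
  have hc : 0 < √(1 / 2 : ℝ) := by positivity
  rw [← Ioc_union_Ioi_eq_Ioi hc.le, setIntegral_union (Ioc_disjoint_Ioi le_rfl) measurableSet_Ioi
      hg.integrableOn_Ioc_sqrt hg.integrableOn_Ioi_sqrt_self, integral_Ioc_eq_integral_Ioo,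
    integral_Ioo_eq_integral_inversion hc,
    setIntegral_congr_fun measurableSet_Ioi fun v hv => hg.inversion_smul (hc.trans hv),
    ← integral_add hg.integrableOn_Ioi_sqrt_sq_mul hg.integrableOn_Ioi_sqrt_self]
  exact setIntegral_congr_fun measurableSet_Ioi fun v _ => by ring

variable {Φ E : ℂ → ℂ}

theorem primitive_fricke_add_const (hg : IsFrickeForm g)
    (hΦ : ∀ z : ℂ, 0 < z.im → HasDerivAt Φ ((1 - 2 * z ^ 2) * g z) z) {z w : ℂ}
    (hz : 0 < z.im) (hw : 0 < w.im) :
    Φ (-1 / (2 * z)) + Φ z = Φ (-1 / (2 * w)) + Φ w := by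
  refine eq_of_hasDerivAt_zero_upperHalfPlaneSet (F := fun z => Φ (-1 / (2 * z)) + Φ z)
    (fun z hz => ?_) hz hw
  have hz0 : z ≠ 0 := fun h => by simp [h] at hz
  have hder : HasDerivAt (fun z : ℂ => -1 / (2 * z)) (1 / (2 * z ^ 2)) z := by
    refine ((hasDerivAt_const z (-1 : ℂ)).div ((hasDerivAt_id' z).const_mul 2)
      (by simpa using hz0)).congr_deriv ?_
    field_simp
    ring
  refine (((hΦ _ (im_neg_one_div_two_mul_pos hz)).comp z hder).add (hΦ z hz)).congr_deriv ?_
  rw [hg.fricke z hz]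
  field_simp
  ring

theorem primitive_add_primitive (hg : IsFrickeForm g)
    (hΦ : ∀ z : ℂ, 0 < z.im → HasDerivAt Φ ((1 - 2 * z ^ 2) * g z) z) :
    Φ (1 / 2 + I / 2) + Φ (-1 / 2 + I / 2) = 2 * Φ ((√(1 / 2) : ℝ) * I) := by
  have h := hg.primitive_fricke_add_const hΦ (z := -1 / 2 + I / 2) (w := (√(1 / 2) : ℝ) * I)
    (by simp) (by simp)
  have hcorner : -1 / (2 * (-1 / 2 + I / 2)) = 1 / 2 + I / 2 := by
    have hne : (-1 / 2 + I / 2 : ℂ) ≠ 0 := fun h => by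
      simpa using congrArg Complex.im h
    rw [div_eq_iff (mul_ne_zero two_ne_zero hne)]
    linear_combination (-1 / 2) * I_sq
  have hfixed : -1 / (2 * (((√(1 / 2) : ℝ) : ℂ) * I)) = (√(1 / 2) : ℝ) * I := by
    have hsq : ((√(1 / 2) : ℝ) : ℂ) ^ 2 = 1 / 2 := by
      rw [← ofReal_pow, Real.sq_sqrt (by norm_num)]
      norm_num
    have hne : ((√(1 / 2) : ℝ) : ℂ) ≠ 0 := ofReal_ne_zero.2 (by positivity)
    rw [div_eq_iff (mul_ne_zero two_ne_zero (mul_ne_zero hne I_ne_zero))]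
    linear_combination (-2 * I ^ 2) * hsq - I_sq
  rw [hcorner, hfixed] at h
  linear_combination h

theorem primitive_translate (hg : IsFrickeForm g)
    (hΦ : ∀ z : ℂ, 0 < z.im → HasDerivAt Φ ((1 - 2 * z ^ 2) * g z) z)
    (hE : ∀ z : ℂ, 0 < z.im → HasDerivAt E (z * g z) z) {z : ℂ} (hz : 0 < z.im) :
    Φ (z + 1) + Φ z + 2 * (E (z + 1) - E z) = 2 * Φ ((√(1 / 2) : ℝ) * I)
      + 2 * (E (1 / 2 + I / 2) - E (-1 / 2 + I / 2)) := by
  have hconst := eq_of_hasDerivAt_zero_upperHalfPlaneSet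
    (F := fun z => Φ (z + 1) + Φ z + 2 * (E (z + 1) - E z)) (fun z hz => ?_) hz
    (w := -1 / 2 + I / 2) (by simp)
  · rw [hconst, ← hg.primitive_add_primitive hΦ,
      show (-1 / 2 + I / 2 + 1 : ℂ) = 1 / 2 + I / 2 by ring]
  · have hz1 : 0 < (z + 1).im := by simpa using hz
    refine ((((hΦ _ hz1).comp_add_const z 1).add (hΦ z hz)).add
      (((hE _ hz1).comp_add_const z 1 |>.sub (hE z hz)).const_mul 2)).congr_deriv ?_
    rw [hg.add_one z hz]
    ring

theorem tendsto_primitive (hg : IsFrickeForm g)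
    (hΦ : ∀ z : ℂ, 0 < z.im → HasDerivAt Φ ((1 - 2 * z ^ 2) * g z) z) :
    Tendsto (fun v : ℝ => Φ (v * I)) atTop
      (𝓝 (Φ ((√(1 / 2) : ℝ) * I) + I * ∫ v in Ioi (0 : ℝ), g (v * I))) := by
  have hder : ∀ v ∈ Ici √(1 / 2), HasDerivAt (fun v : ℝ => Φ (v * I))
      (I * ((1 + 2 * (v : ℂ) ^ 2) * g (v * I))) v := fun v hv => by
    have hv0 : 0 < v := lt_of_lt_of_le (by positivity) hv
    refine ((hΦ (v * I) (by simpa using hv0)).comp v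
      (((hasDerivAt_id' v).ofReal_comp).mul_const I)).congr_deriv ?_
    rw [mul_pow, I_sq]
    push_cast
    ring
  have hint := hg.integrableOn_Ioi_sqrt.const_mul I
  have hlim := tendsto_limUnder_of_hasDerivAt_of_integrableOn_Ioi
    (fun v hv => hder v (Ioi_subset_Ici_self hv)) hint
  rwa [hg.integral_Ioi, ← integral_const_mul,
    integral_Ioi_of_hasDerivAt_of_tendsto' hder hint hlim, add_sub_cancel]

theorem integral_eq_primitive_sub (hg : IsFrickeForm g)
    (hE : ∀ z : ℂ, 0 < z.im → HasDerivAt E (z * g z) z) :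
    ∫ t in (-1 / 2 : ℝ)..(1 / 2 : ℝ), ((t : ℂ) + I / 2) * g (t + I / 2)
      = E (1 / 2 + I / 2) - E (-1 / 2 + I / 2) := by
  have hder (t : ℝ) : HasDerivAt (fun t : ℝ => E (t + I / 2)) ((t + I / 2) * g (t + I / 2)) t := by
    have hline : HasDerivAt (fun t : ℝ => (t : ℂ) + I / 2) 1 t :=
      ofRealCLM.hasDerivAt.add_const (I / 2)
    exact ((hE (t + I / 2) (by simp)).comp t hline).congr_deriv (mul_one _)
  have hcont : Continuous fun t : ℝ => ((t : ℂ) + I / 2) * g (t + I / 2) :=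
    .mul (by fun_prop) <| continuous_iff_continuousAt.2 fun t =>
      ContinuousAt.comp (f := fun t : ℝ => (t : ℂ) + I / 2)
        (hg.differentiableAt _ (by simp)).continuousAt (by fun_prop)
  rw [intervalIntegral.integral_eq_sub_of_hasDerivAt (fun t _ => hder t)
    (hcont.intervalIntegrable _ _)]
  push_cast
  rfl

theorem integral_segment_eq_integral_imaginary_axis (hg : IsFrickeForm g) :
    ∫ t in (-1 / 2 : ℝ)..(1 / 2 : ℝ), ((t : ℂ) + I / 2) * g (t + I / 2)
      = I * ∫ v in Ioi (0 : ℝ), g (v * I) := by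
  have hgd : DifferentiableOn ℂ g UpperHalfPlane.upperHalfPlaneSet := fun z hz =>
    (hg.differentiableAt z hz).differentiableWithinAt
  obtain ⟨Φ, hΦ⟩ := isExactOn_upperHalfPlaneSet (f := fun z => (1 - 2 * z ^ 2) * g z)
    (.mul (by fun_prop) hgd)
  obtain ⟨E, hE⟩ := isExactOn_upperHalfPlaneSet (f := fun z => z * g z) (.mul (by fun_prop) hgd)
  have hΦ_diff := hg.tendsto_primitive_sub (fun z _ => norm_one_sub_mul_le g z) hΦ
  have hE_diff := hg.tendsto_primitive_sub (fun z _ => norm_id_mul_le g z) hE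
  have hlim := (hΦ_diff.add ((hg.tendsto_primitive hΦ).const_mul 2)).add (hE_diff.const_mul 2)
  have hconst := hlim.congr' (f₂ := fun _ => 2 * Φ ((√(1 / 2) : ℝ) * I)
      + 2 * (E (1 / 2 + I / 2) - E (-1 / 2 + I / 2))) <| by
    filter_upwards [eventually_gt_atTop (0 : ℝ)] with v hv
    rw [← hg.primitive_translate hΦ hE (z := v * I) (by simpa using hv)]
    ring
  rw [hg.integral_eq_primitive_sub hE]
  linear_combination (1 / 2) * tendsto_nhds_unique tendsto_const_nhds hconst

end IsFrickeForm

end Contour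

section Eta

theorem dedekindEta_eq_exp_mul_tprod (τ : ℂ) :
    dedekindEta τ = cexp (π * I * τ / 12) * ∏' n : ℕ, (1 - cexp (2 * π * I * τ) ^ (n + 1)) := by
  simp only [dedekindEta, ← Complex.exp_nat_mul]
  push_cast
  ring_nf

theorem dedekindEta_eq_eta : dedekindEta = ModularForm.eta := by
  funext τ
  rw [dedekindEta_eq_exp_mul_tprod, ModularForm.eta]
  congr 1
  · simp only [Function.Periodic.qParam]
    push_cast
    ring_nf
  · refine tprod_congr fun n => ?_
    rw [ModularForm.eta_q_eq_pow]

theorem differentiableAt_dedekindEta {z : ℂ} (hz : 0 < z.im) :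
    DifferentiableAt ℂ dedekindEta z := by
  rw [dedekindEta_eq_eta]
  exact ModularForm.differentiableAt_eta_of_mem_upperHalfPlaneSet hz

theorem dedekindEta_neg_one_div_pow_four {z : ℂ} (hz : 0 < z.im) :
    dedekindEta (-1 / z) ^ 4 = -z ^ 2 * dedekindEta z ^ 4 := by
  have hsqrt (w : ℂ) : Complex.sqrt w ^ 4 = w ^ 2 := by
    rw [show (4 : ℕ) = 2 * 2 from rfl, pow_mul]
    simp [Complex.sqrt]
  have h := ModularForm.eta_comp_eq_csqrt_I_inv (show z ∈ UpperHalfPlane.upperHalfPlaneSet from hz)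
  simp only [Function.comp, Pi.smul_apply, Pi.mul_apply, smul_eq_mul] at h
  rw [dedekindEta_eq_eta, h, mul_pow, mul_pow, inv_pow, hsqrt, hsqrt, I_sq]
  ring

theorem dedekindEta_add_one (z : ℂ) :
    dedekindEta (z + 1) = cexp (π * I / 12) * dedekindEta z := by
  have hq : cexp (2 * π * I * (z + 1)) = cexp (2 * π * I * z) := by
    rw [mul_add, mul_one, Complex.exp_add, Complex.exp_two_pi_mul_I, mul_one]
  rw [dedekindEta_eq_exp_mul_tprod, dedekindEta_eq_exp_mul_tprod, hq, ← mul_assoc,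
    ← Complex.exp_add]
  ring_nf

theorem exists_norm_dedekindEta_le :
    ∃ B, 0 ≤ B ∧ ∀ z : ℂ, 1 / 2 ≤ z.im → ‖dedekindEta z‖ ≤ rexp (-π * z.im / 12) * B := by
  have hcont : ContinuousOn (fun q : ℂ => ∏' n : ℕ, (1 - q ^ (n + 1)))
      (Metric.closedBall 0 (rexp (-π))) :=
    ModularForm.differentiableOn_tprod_one_sub_pow.continuousOn.mono
      (Metric.closedBall_subset_ball (by simp [Real.pi_pos]))
  obtain ⟨B, hB⟩ := (isCompact_closedBall 0 _).exists_bound_of_continuousOn hcont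
  refine ⟨B, (norm_nonneg _).trans (hB 0 (by simp [Real.exp_nonneg])), fun z hz => ?_⟩
  rw [dedekindEta_eq_exp_mul_tprod, norm_mul]
  refine mul_le_mul (le_of_eq ?_) (hB _ ?_) (norm_nonneg _) (Real.exp_nonneg _)
  · simp [Complex.norm_exp]
  · rw [mem_closedBall_zero_iff, Complex.norm_exp, Real.exp_le_exp]
    simp only [mul_re, mul_im, re_ofNat, im_ofNat, ofReal_re, ofReal_im, I_re, I_im]
    nlinarith [Real.pi_pos]

/-- `η(τ)⁴ η(2τ)⁴`, the newform `f_{8.4.a.a}` evaluated at `τ / 2`. -/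
noncomputable def etaProduct (τ : ℂ) : ℂ := dedekindEta τ ^ 4 * dedekindEta (2 * τ) ^ 4

theorem etaProduct_add_one (z : ℂ) : etaProduct (z + 1) = -etaProduct z := by
  have hexp : cexp (π * I / 12) ^ 12 = -1 := by
    rw [← Complex.exp_nat_mul, ← Complex.exp_pi_mul_I]
    push_cast
    ring_nf
  rw [etaProduct, etaProduct, show 2 * (z + 1) = 2 * z + 1 + 1 by ring, dedekindEta_add_one,
    dedekindEta_add_one, dedekindEta_add_one]
  linear_combination (dedekindEta z ^ 4 * dedekindEta (2 * z) ^ 4) * hexp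

theorem etaProduct_neg_one_div_two_mul {z : ℂ} (hz : 0 < z.im) :
    etaProduct (-1 / (2 * z)) = 4 * z ^ 4 * etaProduct z := by
  have hz0 : z ≠ 0 := fun h => by simp [h] at hz
  rw [etaProduct, etaProduct, dedekindEta_neg_one_div_pow_four (by simpa using hz),
    show 2 * (-1 / (2 * z)) = -1 / z by field_simp, dedekindEta_neg_one_div_pow_four hz]
  ring

theorem exists_norm_etaProduct_le :
    ∃ C, ∀ z : ℂ, 1 / 2 ≤ z.im → ‖etaProduct z‖ ≤ C * rexp (-π * z.im) := by
  obtain ⟨B, _, hη⟩ := exists_norm_dedekindEta_le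
  refine ⟨B ^ 8, fun z hz => ?_⟩
  rw [etaProduct, norm_mul, norm_pow, norm_pow]
  calc ‖dedekindEta z‖ ^ 4 * ‖dedekindEta (2 * z)‖ ^ 4
      ≤ (rexp (-π * z.im / 12) * B) ^ 4 * (rexp (-π * (2 * z).im / 12) * B) ^ 4 := by
        gcongr
        · exact hη z hz
        · exact hη (2 * z) (by simp; linarith)
    _ = B ^ 8 * (rexp (-π * z.im / 12) ^ 4 * rexp (-π * (2 * z).im / 12) ^ 4) := by ring
    _ = B ^ 8 * rexp (-π * z.im) := by
        rw [← Real.exp_nat_mul, ← Real.exp_nat_mul, ← Real.exp_add]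
        simp only [mul_im, re_ofNat, im_ofNat]
        push_cast
        ring_nf

theorem isFrickeForm_etaProduct : IsFrickeForm etaProduct where
  differentiableAt z hz := ((differentiableAt_dedekindEta hz).pow 4).mul
    ((DifferentiableAt.comp (f := fun z => 2 * z) z
      (differentiableAt_dedekindEta (by simpa using hz)) (by fun_prop)).pow 4)
  add_one z _ := etaProduct_add_one z
  fricke _ := etaProduct_neg_one_div_two_mul
  exists_norm_le := exists_norm_etaProduct_le.imp fun _ h => ⟨π, Real.pi_pos, h⟩

end Eta

section EvenLegendreCoeff

/-- The coefficient `(1/2)ₖ / k!` as a real number. -/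
noncomputable def halfPochRatio (k : ℕ) : ℝ := ∏ i ∈ Finset.range k, ((1 / 2 + i) / (1 + i) : ℝ)

theorem halfPochRatio_zero : halfPochRatio 0 = 1 := by simp [halfPochRatio]

theorem halfPochRatio_succ (k : ℕ) :
    halfPochRatio (k + 1) = halfPochRatio k * ((1 / 2 + k) / (1 + k)) := by
  simp only [halfPochRatio, Finset.prod_range_succ]

theorem halfPochRatio_pos (k : ℕ) : 0 < halfPochRatio k :=
  Finset.prod_pos fun i _ => by positivity

/-- The coefficient of `x ^ (2 * j)` in the even Legendre polynomial
`₂F₁(-k, k + 1/2; 1/2; x²) = P₂ₖ(x) / P₂ₖ(0)`. -/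
noncomputable def evenLegendreCoeff (k j : ℕ) : ℝ :=
  (-1) ^ j * k.choose j * ∏ i ∈ Finset.range j, ((k + 1 / 2 + i) / (i + 1 / 2) : ℝ)

theorem evenLegendreCoeff_zero_right (k : ℕ) : evenLegendreCoeff k 0 = 1 := by
  simp [evenLegendreCoeff]

theorem evenLegendreCoeff_self_succ (k : ℕ) : evenLegendreCoeff k (k + 1) = 0 := by
  simp [evenLegendreCoeff]

theorem evenLegendreCoeff_succ_right (k j : ℕ) :
    evenLegendreCoeff k (j + 1)
      = -(k - j) * (k + 1 / 2 + j) / ((j + 1) * (j + 1 / 2)) * evenLegendreCoeff k j := by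
  have hchoose : (k.choose (j + 1) : ℝ) * (j + 1) = k.choose j * (k - j) := by
    rcases le_or_gt j k with hj | hj
    · rw [← Nat.cast_sub hj]
      exact_mod_cast Nat.choose_succ_right_eq k j
    · simp [Nat.choose_eq_zero_of_lt hj, Nat.choose_eq_zero_of_lt (hj.trans j.lt_succ_self)]
  rw [evenLegendreCoeff, evenLegendreCoeff, Finset.prod_range_succ, pow_succ,
    eq_div_of_mul_eq (by positivity) hchoose]
  field_simp

theorem prod_range_add_one_div_mul (x : ℝ) (d : ℕ → ℝ) (n : ℕ) :
    (∏ i ∈ Finset.range n, (x + 1 + i) / d i) * x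
      = (∏ i ∈ Finset.range n, (x + i) / d i) * (x + n) := by
  induction n with
  | zero => simp
  | succ n ih =>
    rw [Finset.prod_range_succ, Finset.prod_range_succ, mul_right_comm, ih]
    push_cast
    ring

theorem evenLegendreCoeff_succ_succ (k j : ℕ) :
    evenLegendreCoeff (k + 1) (j + 1)
      = -(k + 1) * (k + 1 / 2 + j) * (k + 3 / 2 + j) / ((j + 1) * (j + 1 / 2) * (k + 1 / 2))
        * evenLegendreCoeff k j := by
  have hchoose : ((k + 1).choose (j + 1) : ℝ) * (j + 1) = (k + 1) * k.choose j := by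
    exact_mod_cast (Nat.add_one_mul_choose_eq k j).symm
  have hprod := prod_range_add_one_div_mul (k + 1 / 2) (fun i => i + 1 / 2) j
  have hshift : (k + 1 : ℕ) + (1 / 2 : ℝ) = k + 1 / 2 + 1 := by push_cast; ring
  simp only [evenLegendreCoeff, Finset.prod_range_succ, pow_succ, hshift]
  rw [eq_div_of_mul_eq (by positivity) hprod, eq_div_of_mul_eq (by positivity) hchoose]
  field_simp
  ring

theorem sum_range_succ_eq_of_telescope {f h : ℕ → ℝ} (h0 : f 0 = h 0)
    (hs : ∀ j, f (j + 1) = h (j + 1) - h j) (n : ℕ) : ∑ j ∈ Finset.range (n + 1), f j = h n := by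
  rw [Finset.sum_range_succ', Finset.sum_congr rfl fun j _ => hs j, Finset.sum_range_sub, h0,
    sub_add_cancel]

theorem sum_range_evenLegendreCoeff_extend (k : ℕ) (f : ℕ → ℝ) :
    ∑ j ∈ Finset.range (k + 1 + 1), evenLegendreCoeff k j * f j
      = ∑ j ∈ Finset.range (k + 1), evenLegendreCoeff k j * f j := by
  rw [Finset.sum_range_succ, evenLegendreCoeff_self_succ, zero_mul, add_zero]

theorem sum_evenLegendreCoeff_mul_halfPochRatio_sq (k : ℕ) :
    ∑ j ∈ Finset.range (k + 1), evenLegendreCoeff k j * halfPochRatio j ^ 2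
      = halfPochRatio k ^ 2 := by
  induction k with
  | zero => simp [evenLegendreCoeff_zero_right, halfPochRatio_zero]
  | succ k ih =>
    -- This is the Pfaff–Saalschütz sum `₃F₂(-k, k + 1/2, 1/2; 1, 1; 1)`; the certificate comes from
    -- Zeilberger's algorithm.
    have htele := sum_range_succ_eq_of_telescope
      (f := fun j => (k + 1) ^ 2 * (evenLegendreCoeff (k + 1) j * halfPochRatio j ^ 2)
        - (k + 1 / 2) ^ 2 * (evenLegendreCoeff k j * halfPochRatio j ^ 2))
      (h := fun j => (2 * k + 3 / 2) / (k + 1 / 2) * (k + 1 / 2 + j) * (j + 1 / 2)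
        * evenLegendreCoeff k j * halfPochRatio j ^ 2)
      (by simp only [evenLegendreCoeff_zero_right, halfPochRatio_zero]
          push_cast
          field_simp
          ring)
      (fun j => by
        simp only [evenLegendreCoeff_succ_succ, evenLegendreCoeff_succ_right, halfPochRatio_succ]
        push_cast
        field_simp
        ring) (k + 1)
    rw [Finset.sum_sub_distrib, ← Finset.mul_sum, ← Finset.mul_sum,
      sum_range_evenLegendreCoeff_extend, ih, evenLegendreCoeff_self_succ] at htele
    rw [halfPochRatio_succ]
    field_simp
    linear_combination 4 * htele

/-- The scalar product of the `k`-th even Legendre polynomial with `x ^ (2 * m)` in `L²(0, 1)`,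
multiplied by `2`. -/
noncomputable def evenLegendreMoment (k m : ℕ) : ℝ :=
  ∑ j ∈ Finset.range (k + 1), evenLegendreCoeff k j * (1 / (j + m + 1 / 2))

theorem evenLegendreMoment_succ_left (k m : ℕ) :
    evenLegendreMoment (k + 1) m
      = (k - m) * (k + 1) / ((k + 1 / 2) * (k + m + 3 / 2)) * evenLegendreMoment k m := by
  have htele := sum_range_succ_eq_of_telescope
    (f := fun j => (k + 1 / 2) * (k + m + 3 / 2) * (evenLegendreCoeff (k + 1) j
        * (1 / (j + m + 1 / 2)))
      - (k - m) * (k + 1) * (evenLegendreCoeff k j * (1 / (j + m + 1 / 2))))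
    (h := fun j => (2 * k + 3 / 2) / (k + 1 / 2) * (k + 1 / 2 + j) * evenLegendreCoeff k j)
    (by simp only [evenLegendreCoeff_zero_right]
        push_cast
        field_simp
        ring)
    (fun j => by
      simp only [evenLegendreCoeff_succ_succ, evenLegendreCoeff_succ_right]
      push_cast
      field_simp
      ring) (k + 1)
  rw [Finset.sum_sub_distrib, ← Finset.mul_sum, ← Finset.mul_sum,
    sum_range_evenLegendreCoeff_extend, evenLegendreCoeff_self_succ, mul_zero, sub_eq_zero] at htele
  rw [div_mul_eq_mul_div, eq_div_iff (by positivity), mul_comm]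
  exact htele

theorem evenLegendreMoment_succ_right (k m : ℕ) :
    (m + 1 - k) * (k + m + 3 / 2) * evenLegendreMoment k (m + 1)
      = (m + 1 / 2) * (m + 1) * evenLegendreMoment k m := by
  induction k with
  | zero =>
    simp only [evenLegendreMoment, zero_add, Finset.sum_range_one, evenLegendreCoeff_zero_right]
    push_cast
    field_simp
    ring
  | succ k ih =>
    rw [evenLegendreMoment_succ_left, evenLegendreMoment_succ_left]
    push_cast
    field_simp
    linear_combination 2 * (k - m) * (2 * (k + m) + 5) * ih

theorem evenLegendreMoment_eq_zero {k m : ℕ} (h : m < k) : evenLegendreMoment k m = 0 := by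
  induction k, h using Nat.le_induction with
  | base => simp [evenLegendreMoment_succ_left]
  | succ k _ ih => rw [evenLegendreMoment_succ_left, ih, mul_zero]

theorem evenLegendreCoeff_mul_moment_self (k : ℕ) :
    evenLegendreCoeff k k * evenLegendreMoment k k * halfPochRatio k ^ 2 = 1 / (2 * k + 1 / 2) := by
  induction k with
  | zero => simp [evenLegendreMoment, evenLegendreCoeff_zero_right, halfPochRatio_zero]
  | succ k ih =>
    have hright := evenLegendreMoment_succ_right k k
    rw [add_sub_cancel_left, one_mul, mul_comm] at hright
    rw [evenLegendreMoment_succ_left, eq_div_of_mul_eq (by positivity) hright,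
      evenLegendreCoeff_succ_succ, halfPochRatio_succ]
    push_cast
    have hk : (2 * k + 1 / 2 : ℝ) ≠ 0 := by positivity
    rw [eq_div_iff hk] at ih
    rw [eq_div_iff (by positivity)]
    refine Eq.trans ?_ ih
    field_simp
    ring

end EvenLegendreCoeff

section EvenLegendre

theorem integral_unitInterval_pow (n : ℕ) : ∫ x : unitInterval, (x : ℝ) ^ n = 1 / (n + 1) := by
  rw [integral_subtype (s := unitInterval) measurableSet_Icc (fun x : ℝ => x ^ n),
    integral_Icc_eq_integral_Ioc, ← intervalIntegral.integral_of_le zero_le_one, integral_pow]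
  simp

/-- The even Legendre polynomial `P₂ₖ(x) / P₂ₖ(0)` as a function on `[0, 1]`. -/
noncomputable def evenLegendre (k : ℕ) : C(unitInterval, ℝ) :=
  ⟨fun x => ∑ j ∈ Finset.range (k + 1), evenLegendreCoeff k j * (x : ℝ) ^ (2 * j), by fun_prop⟩

theorem evenLegendre_apply (k : ℕ) (x : unitInterval) :
    evenLegendre k x
      = ∑ j ∈ Finset.range (k + 1), evenLegendreCoeff k j * (x : ℝ) ^ (2 * j) := rfl

theorem integral_evenLegendre_mul (k : ℕ) {F : unitInterval → ℝ} (hF : Integrable F) :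
    ∫ x, evenLegendre k x * F x
      = ∑ j ∈ Finset.range (k + 1),
        evenLegendreCoeff k j * ∫ x : unitInterval, (x : ℝ) ^ (2 * j) * F x := by
  have hint (j : ℕ) : Integrable fun x : unitInterval => (x : ℝ) ^ (2 * j) * F x :=
    hF.bdd_mul (c := 1) (by fun_prop) (ae_of_all _ fun x => by
      simpa [abs_of_nonneg x.2.1] using pow_le_one₀ x.2.1 x.2.2)
  simp only [evenLegendre_apply, Finset.sum_mul, mul_assoc]
  rw [integral_finsetSum _ fun j _ => (hint j).const_mul _]
  simp only [integral_const_mul]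

theorem integrable_continuousMap (f : C(unitInterval, ℝ)) : Integrable f :=
  f.continuous.integrable_of_hasCompactSupport (HasCompactSupport.of_compactSpace f)

theorem integral_pow_mul_evenLegendre (k m : ℕ) :
    ∫ x : unitInterval, (x : ℝ) ^ (2 * m) * evenLegendre k x = evenLegendreMoment k m / 2 := by
  have hint := integrable_continuousMap ⟨fun x => (x : ℝ) ^ (2 * m), by fun_prop⟩
  simp only [ContinuousMap.coe_mk] at hint
  simp only [mul_comm _ (evenLegendre k _)]
  rw [integral_evenLegendre_mul k hint, evenLegendreMoment, Finset.sum_div]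
  refine Finset.sum_congr rfl fun j _ => ?_
  simp only [← pow_add, integral_unitInterval_pow]
  push_cast
  field_simp

theorem integral_evenLegendre_mul_evenLegendre (k l : ℕ) :
    ∫ x, evenLegendre k x * evenLegendre l x
      = ∑ j ∈ Finset.range (k + 1), evenLegendreCoeff k j * (evenLegendreMoment l j / 2) := by
  simp only [integral_evenLegendre_mul k (integrable_continuousMap _),
    integral_pow_mul_evenLegendre]

theorem integral_evenLegendre_mul_evenLegendre_of_lt {k l : ℕ} (h : k < l) :
    ∫ x, evenLegendre k x * evenLegendre l x = 0 := by
  rw [integral_evenLegendre_mul_evenLegendre]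
  refine Finset.sum_eq_zero fun j hj => ?_
  rw [evenLegendreMoment_eq_zero (by grind), zero_div, mul_zero]

theorem integral_evenLegendre_mul_self (k : ℕ) :
    ∫ x, evenLegendre k x * evenLegendre k x = 1 / ((4 * k + 1) * halfPochRatio k ^ 2) := by
  have hpos := halfPochRatio_pos k
  have hlower : ∀ j ∈ Finset.range k,
      evenLegendreCoeff k j * (evenLegendreMoment k j / 2) = 0 := fun j hj => by
    rw [evenLegendreMoment_eq_zero (Finset.mem_range.1 hj), zero_div, mul_zero]
  rw [integral_evenLegendre_mul_evenLegendre, Finset.sum_range_succ,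
    Finset.sum_eq_zero hlower, zero_add, eq_div_iff (by positivity)]
  have hdiag := evenLegendreCoeff_mul_moment_self k
  rw [eq_div_iff (by positivity)] at hdiag
  linear_combination hdiag

/-- `evenLegendre k` scaled to have norm one in `L²([0, 1])`. -/
noncomputable def normalizedEvenLegendre (k : ℕ) : C(unitInterval, ℝ) :=
  (√(4 * k + 1) * halfPochRatio k) • evenLegendre k

theorem inner_toLp_normalizedEvenLegendre (k l : ℕ) :
    inner ℝ (ContinuousMap.toLp 2 volume ℝ (normalizedEvenLegendre k))
        (ContinuousMap.toLp 2 volume ℝ (normalizedEvenLegendre l))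
      = (√(4 * k + 1) * halfPochRatio k) * (√(4 * l + 1) * halfPochRatio l)
        * ∫ x, evenLegendre k x * evenLegendre l x := by
  rw [ContinuousMap.inner_toLp, ← integral_const_mul]
  refine integral_congr_ae (ae_of_all _ fun x => ?_)
  simp only [normalizedEvenLegendre, ContinuousMap.smul_apply, smul_eq_mul, conj_trivial]
  ring

theorem orthonormal_normalizedEvenLegendre :
    Orthonormal ℝ fun k => ContinuousMap.toLp 2 (volume : Measure unitInterval) ℝ
      (normalizedEvenLegendre k) := by
  rw [orthonormal_iff_ite]
  intro k l
  rw [inner_toLp_normalizedEvenLegendre]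
  split_ifs with h
  · subst h
    have hpos := halfPochRatio_pos k
    rw [integral_evenLegendre_mul_self, mul_mul_mul_comm, Real.mul_self_sqrt (by positivity),
      ← sq, mul_one_div_cancel (by positivity)]
  · rcases lt_or_gt_of_ne h with h | h
    · rw [integral_evenLegendre_mul_evenLegendre_of_lt h, mul_zero]
    · simp only [mul_comm (evenLegendre k _)]
      rw [integral_evenLegendre_mul_evenLegendre_of_lt h, mul_zero]

/-- The function `x ↦ x ^ 2` on `[0, 1]`. -/
noncomputable def unitIntervalSq : C(unitInterval, ℝ) := ⟨fun x => (x : ℝ) ^ 2, by fun_prop⟩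

theorem evenLegendre_eq_sum_smul (k : ℕ) :
    evenLegendre k = ∑ j ∈ Finset.range (k + 1), evenLegendreCoeff k j • unitIntervalSq ^ j := by
  ext x
  simp [evenLegendre_apply, unitIntervalSq, pow_mul]

theorem evenLegendreCoeff_self_ne_zero (k : ℕ) : evenLegendreCoeff k k ≠ 0 := fun h => by
  have hdiag := evenLegendreCoeff_mul_moment_self k
  rw [h, zero_mul, zero_mul] at hdiag
  exact (by positivity : (0 : ℝ) < 1 / (2 * k + 1 / 2)).ne hdiag

theorem evenLegendre_mem_span (k : ℕ) :
    evenLegendre k ∈ Submodule.span ℝ (range normalizedEvenLegendre) := by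
  have hpos := halfPochRatio_pos k
  rw [← inv_smul_smul₀ (by positivity : √(4 * k + 1) * halfPochRatio k ≠ 0) (evenLegendre k)]
  exact Submodule.smul_mem _ _ (Submodule.subset_span ⟨k, rfl⟩)

theorem unitIntervalSq_pow_mem_span (m : ℕ) :
    unitIntervalSq ^ m ∈ Submodule.span ℝ (range normalizedEvenLegendre) := by
  induction m using Nat.strong_induction_on with
  | _ m ih =>
    have hsum := evenLegendre_eq_sum_smul m
    rw [Finset.sum_range_succ, ← sub_eq_iff_eq_add'] at hsum
    rw [← inv_smul_smul₀ (evenLegendreCoeff_self_ne_zero m) (unitIntervalSq ^ m), ← hsum]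
    exact Submodule.smul_mem _ _ <| Submodule.sub_mem _ (evenLegendre_mem_span m) <|
      Submodule.sum_mem _ fun j hj => Submodule.smul_mem _ _ (ih j (Finset.mem_range.1 hj))

theorem topologicalClosure_span_normalizedEvenLegendre :
    (Submodule.span ℝ (range normalizedEvenLegendre)).topologicalClosure = ⊤ := by
  have hdense : (Algebra.adjoin ℝ {unitIntervalSq}).topologicalClosure = ⊤ := by
    refine ContinuousMap.subalgebra_topologicalClosure_eq_top_of_separatesPoints _
      fun x y hxy => ⟨_, ⟨unitIntervalSq, Algebra.subset_adjoin rfl, rfl⟩, fun h => hxy ?_⟩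
    exact Subtype.ext ((sq_eq_sq₀ x.2.1 y.2.1).1 h)
  have hle : (Algebra.adjoin ℝ {unitIntervalSq}).toSubmodule
      ≤ Submodule.span ℝ (range normalizedEvenLegendre) := by
    rw [Algebra.adjoin_eq_span, Submodule.span_le]
    rintro f hf
    obtain ⟨n, rfl⟩ := Submonoid.mem_closure_singleton.1 hf
    exact unitIntervalSq_pow_mem_span n
  refine eq_top_iff.2 fun f _ => closure_mono hle ?_
  exact hdense.ge (Algebra.mem_top (x := f))

/-- The even Legendre polynomials as a Hilbert basis of `L²([0, 1])`. -/
noncomputable def evenLegendreBasis :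
    HilbertBasis ℕ ℝ (Lp ℝ 2 (volume : Measure unitInterval)) :=
  HilbertBasis.mk orthonormal_normalizedEvenLegendre <| by
    have hdense := (ContinuousMap.toLp_denseRange ℝ (volume : Measure unitInterval) ℝ
      (p := 2) (by simp)).topologicalClosure_map_submodule
        topologicalClosure_span_normalizedEvenLegendre
    rw [Submodule.map_span, ← range_comp] at hdense
    exact hdense.ge

theorem inner_evenLegendreBasis_toLp {G : unitInterval → ℝ} (hG : MemLp G 2) (k : ℕ) :
    inner ℝ (evenLegendreBasis k) (hG.toLp G)
      = √(4 * k + 1) * halfPochRatio k * ∑ j ∈ Finset.range (k + 1),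
        evenLegendreCoeff k j * ∫ x : unitInterval, (x : ℝ) ^ (2 * j) * G x := by
  rw [← integral_evenLegendre_mul k (hG.integrable one_le_two), ← integral_const_mul,
    evenLegendreBasis, HilbertBasis.coe_mk, L2.inner_def]
  refine integral_congr_ae ?_
  filter_upwards [ContinuousMap.coeFn_toLp (p := 2) (𝕜 := ℝ) volume (normalizedEvenLegendre k),
    hG.coeFn_toLp] with x hk hx
  rw [hk, hx]
  simp only [normalizedEvenLegendre, ContinuousMap.smul_apply, smul_eq_mul,
    RCLike.inner_apply, conj_trivial]
  ring

theorem hasSum_evenLegendre_sq {G : unitInterval → ℝ} (hG : MemLp G 2) :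
    HasSum (fun k : ℕ => (4 * k + 1) * halfPochRatio k ^ 2 *
      (∑ j ∈ Finset.range (k + 1),
        evenLegendreCoeff k j * ∫ x : unitInterval, (x : ℝ) ^ (2 * j) * G x) ^ 2)
      (∫ x, G x ^ 2) := by
  have hnorm : inner ℝ (hG.toLp G) (hG.toLp G) = ∫ x, G x ^ 2 := by
    rw [L2.inner_def]
    refine integral_congr_ae ?_
    filter_upwards [hG.coeFn_toLp] with x hx
    rw [hx, real_inner_self_eq_norm_sq, Real.norm_eq_abs, sq_abs]
  rw [← hnorm]
  refine (evenLegendreBasis.hasSum_inner_mul_inner _ _).congr_fun fun k => ?_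
  rw [real_inner_comm, inner_evenLegendreBasis_toLp, ← sq, mul_pow, mul_pow,
    Real.sq_sqrt (by positivity)]

theorem hasSum_halfPochRatio_pow_six {G : unitInterval → ℝ} (hG : MemLp G 2) {c : ℝ}
    (hmoment : ∀ n : ℕ, ∫ x : unitInterval, (x : ℝ) ^ (2 * n) * G x = c * halfPochRatio n ^ 2) :
    HasSum (fun k : ℕ => (4 * k + 1) * halfPochRatio k ^ 6 * c ^ 2) (∫ x, G x ^ 2) := by
  convert hasSum_evenLegendre_sq hG using 2 with k
  simp only [hmoment, mul_left_comm _ c, ← Finset.mul_sum,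
    sum_evenLegendreCoeff_mul_halfPochRatio_sq]
  ring

end EvenLegendre

section Substitution

variable {f f' : ℝ → ℝ} {a b : ℝ}

theorem lintegral_Ioo_eq_lintegral_deriv_mul_of_strictMonoOn (hab : a ≤ b)
    (hcont : ContinuousOn f (Icc a b)) (hmono : StrictMonoOn f (Icc a b))
    (hderiv : ∀ x ∈ Ioo a b, HasDerivAt f (f' x) x) (u : ℝ → ENNReal) :
    ∫⁻ y in Ioo (f a) (f b), u y = ∫⁻ x in Ioo a b, ENNReal.ofReal (f' x) * u (f x) := by
  rw [← hcont.image_Ioo_of_strictMonoOn hab hmono]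
  exact lintegral_image_eq_lintegral_deriv_mul_of_monotoneOn measurableSet_Ioo
    (fun x hx => (hderiv x hx).hasDerivWithinAt) (hmono.monotoneOn.mono Ioo_subset_Icc_self) u

theorem lintegral_Ioo_eq_lintegral_deriv_mul_of_strictAntiOn (hab : a ≤ b)
    (hcont : ContinuousOn f (Icc a b)) (hanti : StrictAntiOn f (Icc a b))
    (hderiv : ∀ x ∈ Ioo a b, HasDerivAt f (f' x) x) (u : ℝ → ENNReal) :
    ∫⁻ y in Ioo (f b) (f a), u y = ∫⁻ x in Ioo a b, ENNReal.ofReal (-f' x) * u (f x) := by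
  rw [← hcont.image_Ioo_of_strictAntiOn hab hanti]
  exact lintegral_image_eq_lintegral_deriv_mul_of_antitoneOn measurableSet_Ioo
    (fun x hx => (hderiv x hx).hasDerivWithinAt) (hanti.antitoneOn.mono Ioo_subset_Icc_self) u

end Substitution

section AgmIntegral

/-- The integrand of `agmIntegral a b`. -/
noncomputable def agmDensity (a b s : ℝ) : ENNReal :=
  ENNReal.ofReal (1 / √((a ^ 2 - s ^ 2) * (s ^ 2 - b ^ 2)))

/-- The complete elliptic integral `∫_b^a ds / √((a² - s²)(s² - b²))`, which is
`π / (2 * agm a b)`; it is extended-real valued so that no integrability has to be tracked. -/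
noncomputable def agmIntegral (a b : ℝ) : ENNReal := ∫⁻ s in Ioo b a, agmDensity a b s

theorem agmDensity_mul {c : ℝ} (hc : 0 < c) (a b s : ℝ) :
    agmDensity a b s = ENNReal.ofReal (c ^ 2) * agmDensity (c * a) (c * b) (c * s) := by
  rw [agmDensity, agmDensity, ← ENNReal.ofReal_mul (by positivity),
    show ((c * a) ^ 2 - (c * s) ^ 2) * ((c * s) ^ 2 - (c * b) ^ 2)
      = (c ^ 2) ^ 2 * ((a ^ 2 - s ^ 2) * (s ^ 2 - b ^ 2)) by ring,
    Real.sqrt_mul (x := (c ^ 2) ^ 2) (by positivity), Real.sqrt_sq (by positivity)]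
  field_simp

theorem agmIntegral_mul {a b c : ℝ} (hab : b ≤ a) (hc : 0 < c) :
    agmIntegral a b = ENNReal.ofReal c * agmIntegral (c * a) (c * b) := by
  rw [agmIntegral, agmIntegral, lintegral_Ioo_eq_lintegral_deriv_mul_of_strictMonoOn
      (f := (c * ·)) (f' := fun _ => c) hab (by fun_prop)
      ((strictMono_mul_left_of_pos hc).strictMonoOn _)
      (fun x _ => by simpa using (hasDerivAt_id x).const_mul c),
    ← lintegral_const_mul' _ _ ENNReal.ofReal_ne_top]
  simp only [agmDensity_mul hc a b, ← mul_assoc, ← ENNReal.ofReal_mul hc.le, sq]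

/-- The substitution behind the Landen transformation. -/
noncomputable def landenMap (a b s : ℝ) : ℝ := (s + a * b / s) / 2

theorem hasDerivAt_landenMap (a b : ℝ) {s : ℝ} (hs : s ≠ 0) :
    HasDerivAt (landenMap a b) ((1 - a * b / s ^ 2) / 2) s := by
  have h := ((hasDerivAt_id s).add ((hasDerivAt_inv hs).const_mul (a * b))).div_const 2
  refine h.congr_deriv ?_
  simp [div_eq_mul_inv, sub_eq_add_neg]

theorem landenMap_sub_landenMap (a b : ℝ) {s t : ℝ} (hs : s ≠ 0) (ht : t ≠ 0) :
    landenMap a b t - landenMap a b s = (t - s) * (s * t - a * b) / (2 * (s * t)) := by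
  rw [landenMap, landenMap]
  field_simp
  ring

theorem landenMap_self {a b : ℝ} (hb : b ≠ 0) : landenMap a b b = (a + b) / 2 := by
  rw [landenMap, mul_div_cancel_right₀ _ hb, add_comm]

theorem landenMap_self_left {a b : ℝ} (ha : a ≠ 0) : landenMap a b a = (a + b) / 2 := by
  rw [landenMap, mul_div_cancel_left₀ _ ha]

theorem landenMap_sqrt_mul (a b : ℝ) : landenMap a b √(a * b) = √(a * b) := by
  rw [landenMap, Real.div_sqrt, add_self_div_two]

theorem agmDensity_landenMap {a b s : ℝ} (hab : 0 ≤ a * b) (hs : s ≠ 0) (hsab : s ^ 2 ≠ a * b) :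
    ENNReal.ofReal |(1 - a * b / s ^ 2) / 2| * agmDensity ((a + b) / 2) √(a * b) (landenMap a b s)
      = 2 * agmDensity a b s := by
  have hfactor : (((a + b) / 2) ^ 2 - landenMap a b s ^ 2) * (landenMap a b s ^ 2 - √(a * b) ^ 2)
      = ((1 - a * b / s ^ 2) / 4) ^ 2 * ((a ^ 2 - s ^ 2) * (s ^ 2 - b ^ 2)) := by
    rw [Real.sq_sqrt hab, landenMap]
    field_simp
    ring
  have hne : |(1 - a * b / s ^ 2) / 4| ≠ 0 := by
    rw [abs_ne_zero]
    refine div_ne_zero (sub_ne_zero.2 fun h => hsab ?_) four_ne_zero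
    rw [eq_div_iff (pow_ne_zero 2 hs), one_mul] at h
    exact h
  rw [agmDensity, agmDensity, hfactor, Real.sqrt_mul (sq_nonneg _), Real.sqrt_sq_eq_abs,
    ← ENNReal.ofReal_mul (abs_nonneg _), ← ENNReal.ofReal_ofNat, ← ENNReal.ofReal_mul two_pos.le,
    show (1 - a * b / s ^ 2) / 2 = 2 * ((1 - a * b / s ^ 2) / 4) by ring, abs_mul, abs_two,
    mul_one_div, mul_comm 2, mul_div_mul_left _ _ hne, mul_one_div]

section Landen

variable {a b : ℝ} (hb : 0 < b) (hab : b < a)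

include hb hab

theorem sqrt_mul_mem_Ioo : √(a * b) ∈ Ioo b a := by
  have ha := hb.trans hab
  exact ⟨Real.lt_sqrt_of_sq_lt (by nlinarith), (Real.sqrt_lt' ha).2 (by nlinarith)⟩

theorem agmIntegral_landen_lower :
    agmIntegral ((a + b) / 2) √(a * b) = 2 * ∫⁻ s in Ioo b √(a * b), agmDensity a b s := by
  have hpos : 0 ≤ a * b := (mul_pos (hb.trans hab) hb).le
  have hsq := Real.sq_sqrt hpos
  have hanti : StrictAntiOn (landenMap a b) (Icc b √(a * b)) := fun s hs t ht hst => by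
    have hs0 := hb.trans_le hs.1
    have ht0 := hb.trans_le ht.1
    rw [← sub_neg, landenMap_sub_landenMap a b hs0.ne' ht0.ne']
    exact div_neg_of_neg_of_pos (mul_neg_of_pos_of_neg (sub_pos.2 hst)
      (by nlinarith [ht.2])) (by positivity)
  have hsubst := lintegral_Ioo_eq_lintegral_deriv_mul_of_strictAntiOn
    (sqrt_mul_mem_Ioo hb hab).1.le
    (fun s hs => (hasDerivAt_landenMap a b (hb.trans_le hs.1).ne').continuousAt.continuousWithinAt)
    hanti (fun s hs => hasDerivAt_landenMap a b (hb.trans hs.1).ne')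
    (agmDensity ((a + b) / 2) √(a * b))
  rw [landenMap_self hb.ne', landenMap_sqrt_mul] at hsubst
  rw [agmIntegral, hsubst, ← lintegral_const_mul' _ _ ENNReal.ofNat_ne_top]
  refine setLIntegral_congr_fun measurableSet_Ioo fun s hs => ?_
  have hs0 := hb.trans hs.1
  have hlt : s ^ 2 < a * b := by nlinarith [hs.2]
  rw [← agmDensity_landenMap hpos hs0.ne' hlt.ne, abs_of_nonpos]
  have := (one_lt_div (by positivity)).2 hlt
  linarith

theorem agmIntegral_landen_upper :
    agmIntegral ((a + b) / 2) √(a * b) = 2 * ∫⁻ s in Ioo √(a * b) a, agmDensity a b s := by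
  have hpos : 0 < a * b := mul_pos (hb.trans hab) hb
  have hsq := Real.sq_sqrt hpos.le
  have hsqrt := Real.sqrt_pos.2 hpos
  have hmono : StrictMonoOn (landenMap a b) (Icc √(a * b) a) := fun s hs t ht hst => by
    have hs0 := hsqrt.trans_le hs.1
    have ht0 := hsqrt.trans_le ht.1
    rw [← sub_pos, landenMap_sub_landenMap a b hs0.ne' ht0.ne']
    exact div_pos (mul_pos (sub_pos.2 hst) (by nlinarith [hs.1])) (by positivity)
  have hsubst := lintegral_Ioo_eq_lintegral_deriv_mul_of_strictMonoOn
    (sqrt_mul_mem_Ioo hb hab).2.le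
    (fun s hs => (hasDerivAt_landenMap a b
      (hsqrt.trans_le hs.1).ne').continuousAt.continuousWithinAt)
    hmono (fun s hs => hasDerivAt_landenMap a b (hsqrt.trans hs.1).ne')
    (agmDensity ((a + b) / 2) √(a * b))
  rw [landenMap_self_left (hb.trans hab).ne', landenMap_sqrt_mul] at hsubst
  rw [agmIntegral, hsubst, ← lintegral_const_mul' _ _ ENNReal.ofNat_ne_top]
  refine setLIntegral_congr_fun measurableSet_Ioo fun s hs => ?_
  have hs0 := hsqrt.trans hs.1
  have hlt : a * b < s ^ 2 := by nlinarith [hs.1]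
  rw [← agmDensity_landenMap hpos.le hs0.ne' hlt.ne', abs_of_nonneg]
  have := (div_lt_one (by positivity)).2 hlt
  linarith

theorem agmIntegral_landen : agmIntegral a b = agmIntegral ((a + b) / 2) √(a * b) := by
  obtain ⟨hlo, hhi⟩ := sqrt_mul_mem_Ioo hb hab
  have hsplit : agmIntegral a b = (∫⁻ s in Ioo b √(a * b), agmDensity a b s)
      + ∫⁻ s in Ioo √(a * b) a, agmDensity a b s := by
    rw [agmIntegral, ← Ioc_union_Ioo_eq_Ioo hlo.le hhi, lintegral_union measurableSet_Ioo
      (disjoint_left.2 fun _ h h' => h.2.not_gt h'.1), ← setLIntegral_congr Ioo_ae_eq_Ioc]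
  refine (ENNReal.mul_right_inj two_ne_zero ENNReal.ofNat_ne_top).1 ?_
  rw [hsplit, mul_add, ← agmIntegral_landen_lower hb hab, ← agmIntegral_landen_upper hb hab,
    two_mul]

end Landen

theorem lintegral_one_div_sqrt_mul_sub {a b : ℝ} (hab : b < a) :
    ∫⁻ s in Ioo b a, ENNReal.ofReal (1 / √((a - s) * (s - b))) = ENNReal.ofReal π := by
  have hr : 0 < (a - b) / 2 := by linarith
  have hsubst := lintegral_Ioo_eq_lintegral_deriv_mul_of_strictMonoOn
    (f := fun x => (a - b) / 2 * Real.sin x + (a + b) / 2)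
    (f' := fun x => (a - b) / 2 * Real.cos x) (neg_le_self Real.pi_div_two_pos.le)
    (by fun_prop) (fun x hx y hy hxy => by
      have := mul_lt_mul_of_pos_left (Real.strictMonoOn_sin hx hy hxy) hr
      simpa using this)
    (fun x _ => ((Real.hasDerivAt_sin x).const_mul _).add_const _)
    fun s => ENNReal.ofReal (1 / √((a - s) * (s - b)))
  simp only [Real.sin_neg, Real.sin_pi_div_two] at hsubst
  rw [show (a - b) / 2 * -1 + (a + b) / 2 = b by ring,
    show (a - b) / 2 * 1 + (a + b) / 2 = a by ring] at hsubst
  have hone : ∀ x ∈ Ioo (-(π / 2)) (π / 2), ENNReal.ofReal ((a - b) / 2 * Real.cos x)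
      * ENNReal.ofReal (1 / √((a - ((a - b) / 2 * Real.sin x + (a + b) / 2))
        * ((a - b) / 2 * Real.sin x + (a + b) / 2 - b))) = 1 := fun x hx => by
    have hcos := Real.cos_pos_of_mem_Ioo hx
    have hpos : 0 < (a - b) / 2 * Real.cos x := mul_pos hr hcos
    rw [← ENNReal.ofReal_mul hpos.le, show (a - ((a - b) / 2 * Real.sin x + (a + b) / 2))
        * ((a - b) / 2 * Real.sin x + (a + b) / 2 - b) = ((a - b) / 2 * Real.cos x) ^ 2 by
      linear_combination -((a - b) / 2) ^ 2 * Real.sin_sq_add_cos_sq x,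
      Real.sqrt_sq hpos.le, mul_one_div_cancel hpos.ne', ENNReal.ofReal_one]
  rw [hsubst, setLIntegral_congr_fun measurableSet_Ioo hone, setLIntegral_one, Real.volume_Ioo]
  ring_nf

theorem lintegral_const_div_sqrt_mul_sub {a b c : ℝ} (hab : b < a) (hc : 0 < c) :
    ∫⁻ s in Ioo b a, ENNReal.ofReal (1 / (c * √((a - s) * (s - b)))) = ENNReal.ofReal (π / c) := by
  rw [div_eq_inv_mul π c, ENNReal.ofReal_mul (inv_nonneg.2 hc.le),
    ← lintegral_one_div_sqrt_mul_sub hab, ← lintegral_const_mul' _ _ ENNReal.ofReal_ne_top]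
  simp only [← ENNReal.ofReal_mul (inv_nonneg.2 hc.le), one_div, mul_inv]

theorem sqrt_agm_eq_mul {a b s : ℝ} (hs : s ∈ Icc b a) :
    √((a ^ 2 - s ^ 2) * (s ^ 2 - b ^ 2)) = √((a + s) * (s + b)) * √((a - s) * (s - b)) := by
  rw [← Real.sqrt_mul' _ (mul_nonneg (sub_nonneg.2 hs.2) (sub_nonneg.2 hs.1))]
  ring_nf

theorem agmIntegral_le {a b : ℝ} (hb : 0 < b) (hab : b < a) :
    agmIntegral a b ≤ ENNReal.ofReal (π / (2 * b)) := by
  rw [agmIntegral, ← lintegral_const_div_sqrt_mul_sub hab (by positivity)]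
  refine setLIntegral_mono' measurableSet_Ioo fun s hs => ENNReal.ofReal_le_ofReal ?_
  have hs0 := hb.trans hs.1
  have hpos : 0 < √((a - s) * (s - b)) :=
    Real.sqrt_pos.2 (mul_pos (sub_pos.2 hs.2) (sub_pos.2 hs.1))
  rw [sqrt_agm_eq_mul (Ioo_subset_Icc_self hs)]
  gcongr
  exact Real.le_sqrt_of_sq_le (by nlinarith [hs.1, hs.2])

theorem le_agmIntegral {a b : ℝ} (hb : 0 < b) (hab : b < a) :
    ENNReal.ofReal (π / (2 * a)) ≤ agmIntegral a b := by
  have ha := hb.trans hab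
  rw [agmIntegral, ← lintegral_const_div_sqrt_mul_sub hab (by positivity)]
  refine setLIntegral_mono' measurableSet_Ioo fun s hs => ENNReal.ofReal_le_ofReal ?_
  have hs0 := hb.trans hs.1
  have hpos : 0 < √((a - s) * (s - b)) :=
    Real.sqrt_pos.2 (mul_pos (sub_pos.2 hs.2) (sub_pos.2 hs.1))
  rw [sqrt_agm_eq_mul (Ioo_subset_Icc_self hs)]
  gcongr
  exact (Real.sqrt_le_left (by positivity)).2 (by nlinarith [hs.1, hs.2])

end AgmIntegral

section AgmMoments

theorem lintegral_Ioo_lintegral_Ioo_swap {F : ℝ → ℝ → ENNReal}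
    (hF : Measurable (Function.uncurry F)) (a b : ℝ) :
    ∫⁻ x in Ioo a b, ∫⁻ s in Ioo x b, F x s = ∫⁻ s in Ioo a b, ∫⁻ x in Ioo a s, F x s := by
  let T : Set (ℝ × ℝ) := {p | a < p.1 ∧ p.1 < p.2 ∧ p.2 < b}
  have hT : MeasurableSet T := by measurability
  have hleft (x : ℝ) : (Ioo a b).indicator (fun x => ∫⁻ s in Ioo x b, F x s) x
      = ∫⁻ s, T.indicator (Function.uncurry F) (x, s) := by
    by_cases hx : x ∈ Ioo a b
    · rw [indicator_of_mem hx, ← lintegral_indicator measurableSet_Ioo]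
      refine lintegral_congr fun s => ?_
      simp only [indicator_apply, T, mem_Ioo, mem_ofPred_eq, hx.1, true_and, Function.uncurry]
    · rw [indicator_of_notMem hx]
      refine (lintegral_eq_zero_of_ae_eq_zero (ae_of_all _ fun s => ?_)).symm
      exact indicator_of_notMem (fun h => hx ⟨h.1, h.2.1.trans h.2.2⟩) _
  have hright (s : ℝ) : (Ioo a b).indicator (fun s => ∫⁻ x in Ioo a s, F x s) s
      = ∫⁻ x, T.indicator (Function.uncurry F) (x, s) := by
    by_cases hs : s ∈ Ioo a b
    · rw [indicator_of_mem hs, ← lintegral_indicator measurableSet_Ioo]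
      refine lintegral_congr fun x => ?_
      simp only [indicator_apply, T, mem_Ioo, mem_ofPred_eq, hs.2, and_true, Function.uncurry]
    · rw [indicator_of_notMem hs]
      refine (lintegral_eq_zero_of_ae_eq_zero (ae_of_all _ fun x => ?_)).symm
      exact indicator_of_notMem (fun h => hs ⟨h.1.trans h.2.1, h.2.2⟩) _
  rw [← lintegral_indicator measurableSet_Ioo, ← lintegral_indicator measurableSet_Ioo]
  simp only [hleft, hright]
  exact lintegral_lintegral_swap (hF.indicator hT).aemeasurable

theorem integral_cos_pow_even (n : ℕ) :
    ∫ θ in (0 : ℝ)..π / 2, Real.cos θ ^ (2 * n) = π / 2 * halfPochRatio n := by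
  rw [EulerSine.integral_cos_pow_eq, integral_sin_pow_even, halfPochRatio, ← mul_assoc,
    one_div_mul_eq_div]
  refine congrArg _ (Finset.prod_congr rfl fun i _ => ?_)
  field_simp
  ring

theorem lintegral_cos_pow_even (n : ℕ) :
    ∫⁻ θ in Ioo 0 (π / 2), ENNReal.ofReal (Real.cos θ ^ (2 * n))
      = ENNReal.ofReal (π / 2 * halfPochRatio n) := by
  have hcont : Continuous fun θ => Real.cos θ ^ (2 * n) := by fun_prop
  rw [← integral_cos_pow_even, intervalIntegral.integral_of_le Real.pi_div_two_pos.le,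
    integral_Ioc_eq_integral_Ioo, ofReal_integral_eq_lintegral_ofReal
      (hcont.integrableOn_Icc.mono_set Ioo_subset_Icc_self)
      (ae_of_all _ fun θ => (even_two_mul n).pow_nonneg _)]

theorem lintegral_pow_div_sqrt_sub {s : ℝ} (hs : 0 < s) (n : ℕ) :
    ∫⁻ x in Ioo 0 s, ENNReal.ofReal (x ^ (2 * n) / √(s ^ 2 - x ^ 2))
      = ENNReal.ofReal (s ^ (2 * n) * (π / 2 * halfPochRatio n)) := by
  have hsubst := lintegral_Ioo_eq_lintegral_deriv_mul_of_strictAntiOn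
    (f := fun θ => s * Real.cos θ) (f' := fun θ => s * -Real.sin θ) Real.pi_div_two_pos.le
    (by fun_prop) (fun x hx y hy hxy => mul_lt_mul_of_pos_left
      (Real.strictAntiOn_cos ⟨hx.1, by linarith [hx.2, Real.pi_pos]⟩
        ⟨hy.1, by linarith [hy.2, Real.pi_pos]⟩ hxy) hs)
    (fun x _ => (Real.hasDerivAt_cos x).const_mul s)
    fun x => ENNReal.ofReal (x ^ (2 * n) / √(s ^ 2 - x ^ 2))
  simp only [Real.cos_zero, Real.cos_pi_div_two, mul_zero, mul_one] at hsubst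
  rw [hsubst, ENNReal.ofReal_mul (by positivity), ← lintegral_cos_pow_even,
    ← lintegral_const_mul' _ _ ENNReal.ofReal_ne_top]
  refine setLIntegral_congr_fun measurableSet_Ioo fun θ hθ => ?_
  have hsin : 0 < s * Real.sin θ :=
    mul_pos hs (Real.sin_pos_of_pos_of_lt_pi hθ.1 (by linarith [hθ.2, Real.pi_pos]))
  have hpyth : s ^ 2 - (s * Real.cos θ) ^ 2 = (s * Real.sin θ) ^ 2 := by
    linear_combination -s ^ 2 * Real.sin_sq_add_cos_sq θ
  rw [← mul_neg, neg_neg, ← ENNReal.ofReal_mul hsin.le, ← ENNReal.ofReal_mul (by positivity),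
    hpyth, Real.sqrt_sq hsin.le, mul_div_cancel₀ _ hsin.ne', mul_pow]

theorem measurable_agmDensity (a : ℝ) :
    Measurable (Function.uncurry fun b s => agmDensity a b s) := by
  unfold agmDensity Function.uncurry
  fun_prop

theorem lintegral_pow_mul_agmDensity {s : ℝ} (hs : s ∈ Ioo (0 : ℝ) 1) (n : ℕ) :
    ∫⁻ x in Ioo 0 s, ENNReal.ofReal (x ^ (2 * n)) * agmDensity 1 x s
      = ENNReal.ofReal (s ^ (2 * n) / √(1 ^ 2 - s ^ 2))
        * ENNReal.ofReal (π / 2 * halfPochRatio n) := by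
  have hs1 : 0 ≤ 1 ^ 2 - s ^ 2 := by nlinarith [hs.1, hs.2]
  rw [← ENNReal.ofReal_mul (by have := hs.1; positivity), div_mul_eq_mul_div, div_eq_inv_mul,
    ENNReal.ofReal_mul (by positivity), ← lintegral_pow_div_sqrt_sub hs.1,
    ← lintegral_const_mul' _ _ ENNReal.ofReal_ne_top]
  refine setLIntegral_congr_fun measurableSet_Ioo fun x hx => ?_
  have hx0 := hx.1
  rw [agmDensity, ← ENNReal.ofReal_mul (by positivity), ← ENNReal.ofReal_mul (by positivity),
    Real.sqrt_mul hs1]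
  congr 1
  ring

theorem lintegral_pow_mul_agmIntegral (n : ℕ) :
    ∫⁻ x in Ioo 0 1, ENNReal.ofReal (x ^ (2 * n)) * agmIntegral 1 x
      = ENNReal.ofReal (π ^ 2 / 4 * halfPochRatio n ^ 2) := by
  have hpos := halfPochRatio_pos n
  simp only [agmIntegral, ← lintegral_const_mul' _ _ ENNReal.ofReal_ne_top]
  rw [lintegral_Ioo_lintegral_Ioo_swap, setLIntegral_congr_fun measurableSet_Ioo
      fun s hs => lintegral_pow_mul_agmDensity hs n,
    lintegral_mul_const' _ _ ENNReal.ofReal_ne_top, lintegral_pow_div_sqrt_sub one_pos,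
    ← ENNReal.ofReal_mul (by positivity)]
  · ring_nf
  · have := measurable_agmDensity 1
    unfold Function.uncurry at this ⊢
    fun_prop

end AgmMoments

section Theta

/-- The theta series `∑ q ^ n²` over all integers, as a function of the nome `q`; for `0 < q` the
Jacobi theta constants `θ₃` and `θ₄` of nome `q` are `theta q` and `theta (-q)`. -/
noncomputable def theta {𝕜 : Type*} [RCLike 𝕜] (q : 𝕜) : 𝕜 := ∑' n : ℤ, q ^ n.natAbs ^ 2

variable {𝕜 : Type*} [RCLike 𝕜] {q r : 𝕜}

theorem summable_pow_natAbs_sq {ρ : ℝ} (hρ₀ : 0 ≤ ρ) (hρ₁ : ρ < 1) :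
    Summable fun n : ℤ => ρ ^ n.natAbs ^ 2 := by
  have hnat : Summable fun n : ℕ => ρ ^ n ^ 2 :=
    (summable_geometric_of_lt_one hρ₀ hρ₁).of_nonneg_of_le (fun n => by positivity)
      fun n => pow_le_pow_of_le_one hρ₀ hρ₁.le (Nat.le_self_pow two_ne_zero n)
  apply Summable.of_nat_of_neg <;> simpa using hnat

theorem summable_norm_theta (hq : ‖q‖ < 1) : Summable fun n : ℤ => ‖q ^ n.natAbs ^ 2‖ := by
  simpa only [norm_pow] using summable_pow_natAbs_sq (norm_nonneg q) hq

theorem hasSum_theta_mul_theta (hq : ‖q‖ < 1) (hr : ‖r‖ < 1) :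
    HasSum (fun p : ℤ × ℤ => q ^ p.1.natAbs ^ 2 * r ^ p.2.natAbs ^ 2) (theta q * theta r) := by
  have hq' := summable_norm_theta hq
  have hr' := summable_norm_theta hr
  rw [theta, theta, tsum_mul_tsum_of_summable_norm hq' hr']
  exact (summable_mul_of_summable_norm hq' hr').hasSum

theorem neg_pow_natAbs_sq (q : 𝕜) (n : ℤ) :
    (-q) ^ n.natAbs ^ 2 = (-1) ^ n * q ^ n.natAbs ^ 2 := by
  rw [neg_pow]
  rcases Int.even_or_odd n with hn | hn
  · rw [hn.neg_one_zpow, ((Int.natAbs_even.2 hn).pow_of_ne_zero two_ne_zero).neg_one_pow]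
  · rw [hn.neg_one_zpow, (Int.natAbs_odd.2 hn).pow.neg_one_pow]

theorem natAbs_add_sq_add_natAbs_sub_sq (m n : ℤ) :
    (m + n).natAbs ^ 2 + (m - n).natAbs ^ 2 = 2 * m.natAbs ^ 2 + 2 * n.natAbs ^ 2 := by
  zify
  simp only [sq_abs]
  ring

theorem neg_one_zpow_mul_self (n : ℤ) : (-1 : 𝕜) ^ n * (-1) ^ n = 1 := by
  rw [← mul_zpow, neg_one_mul, neg_neg, one_zpow]

/-- The map `(m, n) ↦ (m + n, m - n)` is a bijection onto the pairs of integers of equal parity. -/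
theorem tsum_one_add_neg_one_zpow_mul (F : ℤ × ℤ → 𝕜) :
    ∑' p : ℤ × ℤ, (1 + (-1) ^ p.1 * (-1) ^ p.2) * F p
      = 2 * ∑' p : ℤ × ℤ, F (p.1 + p.2, p.1 - p.2) := by
  have hinj : Function.Injective fun p : ℤ × ℤ => (p.1 + p.2, p.1 - p.2) := by
    rintro ⟨a, b⟩ ⟨c, d⟩ h
    simp only [Prod.mk.injEq] at h ⊢
    omega
  have hneg : (-1 : 𝕜) ≠ 0 := neg_ne_zero.2 one_ne_zero
  rw [← hinj.tsum_eq, ← tsum_mul_left]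
  · refine tsum_congr fun p => ?_
    have hsign : (-1 : 𝕜) ^ (p.1 + p.2) * (-1) ^ (p.1 - p.2) = 1 := by
      rw [← zpow_add₀ hneg, add_add_sub_cancel, (Even.add_self p.1).neg_one_zpow]
    rw [hsign, one_add_one_eq_two]
  · rintro ⟨m, n⟩ hmn
    have heven : Even (m + n) := by
      by_contra hodd
      refine hmn ?_
      dsimp only
      rw [← zpow_add₀ hneg, (Int.not_even_iff_odd.1 hodd).neg_one_zpow, add_neg_cancel, zero_mul]
    obtain ⟨c, hc⟩ := heven
    exact ⟨(c, m - c), by simp only [Prod.mk.injEq]; omega⟩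

theorem theta_sq_add_theta_neg_sq (hq : ‖q‖ < 1) :
    theta q ^ 2 + theta (-q) ^ 2 = 2 * theta (q ^ 2) ^ 2 := by
  have hneg : ‖-q‖ < 1 := by rwa [norm_neg]
  have hsq : ‖q ^ 2‖ < 1 := by rw [norm_pow]; exact pow_lt_one₀ (norm_nonneg q) hq two_ne_zero
  have hsum := (hasSum_theta_mul_theta hq hq).add (hasSum_theta_mul_theta hneg hneg)
  simp only [← sq (theta _)] at hsum
  have hreindex := tsum_one_add_neg_one_zpow_mul
    fun p : ℤ × ℤ => q ^ p.1.natAbs ^ 2 * q ^ p.2.natAbs ^ 2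
  simp only [← pow_add, natAbs_add_sq_add_natAbs_sub_sq] at hreindex
  rw [← hsum.tsum_eq, sq (theta (q ^ 2)), ← (hasSum_theta_mul_theta hsq hsq).tsum_eq]
  simp only [← pow_mul, ← pow_add, ← hreindex, neg_pow_natAbs_sq]
  refine tsum_congr fun p => ?_
  ring

theorem theta_mul_theta_neg (hq : ‖q‖ < 1) : theta q * theta (-q) = theta (-q ^ 2) ^ 2 := by
  have hneg : ‖-q‖ < 1 := by rwa [norm_neg]
  have hsq : ‖-q ^ 2‖ < 1 := by
    rw [norm_neg, norm_pow]; exact pow_lt_one₀ (norm_nonneg q) hq two_ne_zero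
  have hsum := (hasSum_theta_mul_theta hq hneg).add (hasSum_theta_mul_theta hneg hq)
  have hreindex := tsum_one_add_neg_one_zpow_mul
    fun p : ℤ × ℤ => q ^ p.1.natAbs ^ 2 * (-q) ^ p.2.natAbs ^ 2
  have hleft (p : ℤ × ℤ) :
      (1 + (-1) ^ p.1 * (-1) ^ p.2) * (q ^ p.1.natAbs ^ 2 * (-q) ^ p.2.natAbs ^ 2)
        = q ^ p.1.natAbs ^ 2 * (-q) ^ p.2.natAbs ^ 2
          + (-q) ^ p.1.natAbs ^ 2 * q ^ p.2.natAbs ^ 2 := by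
    simp only [neg_pow_natAbs_sq]
    linear_combination (q ^ p.1.natAbs ^ 2 * q ^ p.2.natAbs ^ 2 * (-1) ^ p.1)
      * neg_one_zpow_mul_self (𝕜 := 𝕜) p.2
  have hright (p : ℤ × ℤ) :
      q ^ (p.1 + p.2).natAbs ^ 2 * (-q) ^ (p.1 - p.2).natAbs ^ 2
        = (-q ^ 2) ^ p.1.natAbs ^ 2 * (-q ^ 2) ^ p.2.natAbs ^ 2 := by
    have hsign : (-1 : 𝕜) ^ (p.1 - p.2) = (-1) ^ p.1 * (-1) ^ p.2 := by
      rw [zpow_sub₀ (neg_ne_zero.2 one_ne_zero), div_eq_mul_inv,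
        inv_eq_of_mul_eq_one_right (neg_one_zpow_mul_self p.2)]
    simp only [neg_pow_natAbs_sq]
    rw [hsign, mul_left_comm, ← pow_add, natAbs_add_sq_add_natAbs_sub_sq, pow_add, pow_mul,
      pow_mul]
    ring
  simp only [hleft, hright, hsum.tsum_eq, (hasSum_theta_mul_theta hsq hsq).tsum_eq] at hreindex
  linear_combination hreindex / 2

theorem ofReal_theta (q : ℝ) : ((theta q : ℝ) : ℂ) = theta (q : ℂ) := by
  simp only [theta, ofReal_tsum, ofReal_pow]

theorem differentiableOn_theta_ball :
    DifferentiableOn ℂ (theta : ℂ → ℂ) (Metric.ball 0 1) := by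
  intro z hz
  obtain ⟨ρ, hzρ, hρ₁⟩ := exists_between (mem_ball_zero_iff.1 hz)
  have hdiff : DifferentiableOn ℂ (theta : ℂ → ℂ) (Metric.ball 0 ρ) :=
    Complex.differentiableOn_tsum_of_summable_norm
      (summable_pow_natAbs_sq ((norm_nonneg z).trans hzρ.le) hρ₁)
      (fun n => by fun_prop) Metric.isOpen_ball fun n w hw => by
        rw [norm_pow]
        exact pow_le_pow_left₀ (norm_nonneg w) (mem_ball_zero_iff.1 hw).le _
  exact (hdiff.differentiableAt
    (Metric.isOpen_ball.mem_nhds (mem_ball_zero_iff.2 hzρ))).differentiableWithinAt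

theorem theta_zero : theta (0 : 𝕜) = 1 := by
  rw [theta, tsum_eq_single 0 fun n hn => zero_pow (pow_ne_zero 2 (Int.natAbs_ne_zero.2 hn))]
  simp

theorem hasDerivAt_theta_zero_complex : HasDerivAt (theta : ℂ → ℂ) 2 0 := by
  have hmem : (0 : ℂ) ∈ Metric.ball (0 : ℂ) (1 / 2) := Metric.mem_ball_self (by norm_num)
  have hsum := Complex.hasSum_deriv_of_summable_norm (F := fun (n : ℤ) (w : ℂ) => w ^ n.natAbs ^ 2)
    (summable_pow_natAbs_sq (ρ := 1 / 2) (by norm_num) (by norm_num))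
    (fun n => by fun_prop) Metric.isOpen_ball (fun n w hw => by
      rw [norm_pow]
      exact pow_le_pow_left₀ (norm_nonneg w) (mem_ball_zero_iff.1 hw).le _) hmem
  have htwo : HasSum (fun n : ℤ => deriv (fun w : ℂ => w ^ n.natAbs ^ 2) 0) 2 := by
    have hsupport (n : ℤ) (hn : n ∉ ({1, -1} : Finset ℤ)) :
        deriv (fun w : ℂ => w ^ n.natAbs ^ 2) 0 = 0 := by
      simp only [Finset.mem_insert, Finset.mem_singleton, not_or] at hn
      rcases eq_or_ne n 0 with rfl | hn0
      · simp
      · have hlt : 1 < n.natAbs := by omega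
        simp [Nat.sub_ne_zero_of_lt (Nat.one_lt_pow two_ne_zero hlt)]
    simpa [one_add_one_eq_two] using hasSum_sum_of_ne_finset_zero hsupport
  have hdiff : DifferentiableAt ℂ (theta : ℂ → ℂ) 0 :=
    differentiableOn_theta_ball.differentiableAt (Metric.ball_mem_nhds 0 one_pos)
  rw [← hsum.unique htwo]
  exact hdiff.hasDerivAt

theorem contDiffAt_theta {q : ℝ} (hq : |q| < 1) : ContDiffAt ℝ 1 (theta : ℝ → ℝ) q := by
  have hmem : Metric.ball (0 : ℂ) 1 ∈ 𝓝 (q : ℂ) :=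
    Metric.isOpen_ball.mem_nhds (by simpa using hq)
  have hcontDiff : ContDiffAt ℂ 1 (theta : ℂ → ℂ) q :=
    (differentiableOn_theta_ball.contDiffOn Metric.isOpen_ball).contDiffAt hmem
  simpa only [← ofReal_theta, ofReal_re] using hcontDiff.real_of_complex

theorem hasDerivAt_theta_zero : HasDerivAt (theta : ℝ → ℝ) 2 0 := by
  have h := HasDerivAt.real_of_complex (z := 0) (by simpa using hasDerivAt_theta_zero_complex)
  simpa only [← ofReal_theta, ofReal_re, re_ofNat] using h

theorem tendsto_theta_zero : Tendsto (theta : ℝ → ℝ) (𝓝 0) (𝓝 1) := by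
  simpa only [ContinuousAt, theta_zero] using hasDerivAt_theta_zero.continuousAt

end Theta

section TripleProduct

theorem pow_mem_Ioo_zero_one {q : ℝ} (hq : q ∈ Ioo (0 : ℝ) 1) {n : ℕ} (hn : n ≠ 0) :
    q ^ n ∈ Ioo (0 : ℝ) 1 :=
  ⟨pow_pos hq.1 n, pow_lt_one₀ hq.1.le hq.2 hn⟩

theorem sq_mem_Ioo_zero_one {q : ℝ} (hq : q ∈ Ioo (0 : ℝ) 1) : q ^ 2 ∈ Ioo (0 : ℝ) 1 :=
  pow_mem_Ioo_zero_one hq two_ne_zero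

theorem abs_lt_one_of_mem_Ioo {q : ℝ} (hq : q ∈ Ioo (0 : ℝ) 1) : |q| < 1 :=
  abs_lt.2 ⟨by linarith [hq.1], hq.2⟩

theorem tprod_one_add_pos {ι : Type*} {f : ι → ℝ} (hf : Summable f) (hpos : ∀ i, 0 < 1 + f i) :
    0 < ∏' i, (1 + f i) := by
  rw [← Real.rexp_tsum_eq_tprod hpos (Real.summable_log_one_add_of_summable hf)]
  exact Real.exp_pos _

/-- The finite product `(1 - p) (1 - p ^ 2) ⋯ (1 - p ^ n)`, that is `(p; p)_n`. -/
noncomputable def qPochhammer (p : ℝ) (n : ℕ) : ℝ := ∏ i ∈ Finset.range n, (1 - p ^ (i + 1))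

/-- Euler's function, the infinite product `∏ (1 - p ^ n)` over `n ≥ 1`. -/
noncomputable def eulerFunction (p : ℝ) : ℝ := ∏' n : ℕ, (1 - p ^ (n + 1))

theorem summable_neg_pow_succ {p : ℝ} (hp : |p| < 1) : Summable fun n : ℕ => -p ^ (n + 1) :=
  ((summable_nat_add_iff 1).2 (summable_geometric_of_abs_lt_one hp)).neg

theorem multipliable_one_sub_pow_succ {p : ℝ} (hp : |p| < 1) :
    Multipliable fun n : ℕ => 1 - p ^ (n + 1) := by
  simpa only [sub_eq_add_neg] using
    Real.multipliable_one_add_of_summable (summable_neg_pow_succ hp)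

theorem ofReal_eulerFunction {p : ℝ} (hp : |p| < 1) :
    (eulerFunction p : ℂ) = ∏' n : ℕ, (1 - (p : ℂ) ^ (n + 1)) := by
  simpa [eulerFunction] using (multipliable_one_sub_pow_succ hp).map_tprod Complex.ofRealHom
    Complex.continuous_ofReal

theorem tendsto_qPochhammer {p : ℝ} (hp : |p| < 1) :
    Tendsto (qPochhammer p) atTop (𝓝 (eulerFunction p)) :=
  (multipliable_one_sub_pow_succ hp).hasProd.tendsto_prod_nat

theorem tendsto_eulerFunction_zero : Tendsto eulerFunction (𝓝 0) (𝓝 1) := by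
  have hcomplex : ContinuousAt (fun z : ℂ => ∏' n : ℕ, (1 - z ^ (n + 1))) ((0 : ℝ) : ℂ) :=
    (ModularForm.differentiableOn_tprod_one_sub_pow.differentiableAt
      (Metric.isOpen_ball.mem_nhds (by simp))).continuousAt
  have hre := (Complex.continuous_re.continuousAt.comp hcomplex).comp
    (f := ((↑) : ℝ → ℂ)) Complex.continuous_ofReal.continuousAt
  have hlim := hre.tendsto
  simp only [Function.comp_apply, ofReal_zero, zero_pow (Nat.succ_ne_zero _), sub_zero,
    tprod_one, one_re] at hlim
  refine hlim.congr' ?_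
  filter_upwards [Metric.ball_mem_nhds (0 : ℝ) one_pos] with p hp
  simp only [Function.comp_apply, ← ofReal_eulerFunction (mem_ball_zero_iff.1 hp), ofReal_re]

theorem one_sub_pow_succ_pos {p : ℝ} (hp : p ∈ Ioo (0 : ℝ) 1) (n : ℕ) : 0 < 1 - p ^ (n + 1) :=
  sub_pos.2 (pow_lt_one₀ hp.1.le hp.2 n.succ_ne_zero)

theorem one_sub_pow_succ_le_one {p : ℝ} (hp : p ∈ Ioo (0 : ℝ) 1) (n : ℕ) :
    1 - p ^ (n + 1) ≤ 1 :=
  sub_le_self 1 (pow_pos hp.1 _).le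

theorem qPochhammer_succ (p : ℝ) (n : ℕ) :
    qPochhammer p (n + 1) = qPochhammer p n * (1 - p ^ (n + 1)) :=
  Finset.prod_range_succ _ n

theorem qPochhammer_pos {p : ℝ} (hp : p ∈ Ioo (0 : ℝ) 1) (n : ℕ) : 0 < qPochhammer p n :=
  Finset.prod_pos fun i _ => one_sub_pow_succ_pos hp i

theorem qPochhammer_le_one {p : ℝ} (hp : p ∈ Ioo (0 : ℝ) 1) (n : ℕ) : qPochhammer p n ≤ 1 :=
  Finset.prod_le_one (fun i _ => (one_sub_pow_succ_pos hp i).le)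
    fun i _ => one_sub_pow_succ_le_one hp i

theorem eulerFunction_pos {p : ℝ} (hp : p ∈ Ioo (0 : ℝ) 1) : 0 < eulerFunction p := by
  simpa only [eulerFunction, sub_eq_add_neg] using
    tprod_one_add_pos (summable_neg_pow_succ (abs_lt_one_of_mem_Ioo hp))
      fun n => by simpa only [sub_eq_add_neg] using one_sub_pow_succ_pos hp n

theorem eulerFunction_le_qPochhammer {p : ℝ} (hp : p ∈ Ioo (0 : ℝ) 1) (n : ℕ) :
    eulerFunction p ≤ qPochhammer p n := by
  have hanti : Antitone (qPochhammer p) := antitone_nat_of_succ_le fun k => by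
    rw [qPochhammer_succ]
    exact mul_le_of_le_one_right (qPochhammer_pos hp k).le (one_sub_pow_succ_le_one hp k)
  exact hanti.le_of_tendsto (tendsto_qPochhammer (abs_lt_one_of_mem_Ioo hp)) n

/-- The function `m ↦ 1 / (p; p)_m`, extended by zero to negative `m`. With this convention its
recurrence holds at every integer. -/
noncomputable def qPochhammerInv (p : ℝ) : ℤ → ℝ
  | Int.ofNat n => (qPochhammer p n)⁻¹
  | Int.negSucc _ => 0

theorem qPochhammerInv_of_neg (p : ℝ) {m : ℤ} (hm : m < 0) : qPochhammerInv p m = 0 := by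
  obtain ⟨k, rfl⟩ := Int.eq_negSucc_of_lt_zero hm
  rfl

theorem qPochhammerInv_eq_mul_add_one {p : ℝ} (hp : p ∈ Ioo (0 : ℝ) 1) (m : ℤ) :
    qPochhammerInv p m = (1 - p ^ (m + 1)) * qPochhammerInv p (m + 1) := by
  rcases lt_trichotomy m (-1) with hm | rfl | hm
  · rw [qPochhammerInv_of_neg p (by omega), qPochhammerInv_of_neg p (by omega), mul_zero]
  · simp [qPochhammerInv_of_neg]
  · obtain ⟨k, rfl⟩ := Int.eq_ofNat_of_zero_le (by omega : 0 ≤ m)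
    have hpow : p ^ ((k : ℤ) + 1) = p ^ (k + 1) := by norm_cast
    have hne := (one_sub_pow_succ_pos hp k).ne'
    change (qPochhammer p k)⁻¹ = _ * (qPochhammer p (k + 1))⁻¹
    rw [hpow, qPochhammer_succ, mul_inv, mul_left_comm, mul_inv_cancel₀ hne, mul_one]

theorem abs_qPochhammerInv_le {p : ℝ} (hp : p ∈ Ioo (0 : ℝ) 1) (m : ℤ) :
    |qPochhammerInv p m| ≤ (eulerFunction p)⁻¹ := by
  have hpos := eulerFunction_pos hp
  rcases m with n | n
  · change |(qPochhammer p n)⁻¹| ≤ _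
    rw [abs_of_pos (inv_pos.2 (qPochhammer_pos hp n))]
    exact inv_anti₀ hpos (eulerFunction_le_qPochhammer hp n)
  · change |(0 : ℝ)| ≤ _
    rw [abs_zero]
    exact (inv_pos.2 hpos).le

theorem tendsto_qPochhammerInv {p : ℝ} (hp : p ∈ Ioo (0 : ℝ) 1) :
    Tendsto (qPochhammerInv p) atTop (𝓝 (eulerFunction p)⁻¹) := by
  rw [← Nat.map_cast_int_atTop, tendsto_map'_iff]
  exact (tendsto_qPochhammer (abs_lt_one_of_mem_Ioo hp)).inv₀ (eulerFunction_pos hp).ne'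

/-- The `j`-th term of the finite form of Jacobi's triple product at `z = 1`: the product of
`q ^ j²` and the Gaussian binomial coefficient `[2n, n + j]` in base `q²`. -/
noncomputable def tripleProductTerm (q : ℝ) (n : ℕ) (j : ℤ) : ℝ :=
  q ^ j.natAbs ^ 2 * qPochhammer (q ^ 2) (2 * n)
    * (qPochhammerInv (q ^ 2) (n + j) * qPochhammerInv (q ^ 2) (n - j))

theorem pow_natAbs_sq_eq_zpow (q : ℝ) (j : ℤ) : q ^ j.natAbs ^ 2 = q ^ (j ^ 2 : ℤ) := by
  rw [← zpow_natCast, Nat.cast_pow, Int.natCast_natAbs, sq_abs]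

theorem pow_natAbs_sub_one_sq {q : ℝ} (hq : q ≠ 0) (j : ℤ) :
    q ^ (j - 1).natAbs ^ 2 = q ^ j.natAbs ^ 2 * (q / (q ^ 2) ^ j) := by
  simp only [pow_natAbs_sq_eq_zpow]
  rw [← zpow_natCast q 2, ← zpow_mul, ← mul_div_assoc, ← zpow_add_one₀ hq, ← zpow_sub₀ hq]
  congr 1
  push_cast
  ring

theorem pow_natAbs_add_one_sq {q : ℝ} (hq : q ≠ 0) (j : ℤ) :
    q ^ (j + 1).natAbs ^ 2 = q ^ j.natAbs ^ 2 * (q * (q ^ 2) ^ j) := by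
  simp only [pow_natAbs_sq_eq_zpow]
  rw [← zpow_natCast q 2, ← zpow_mul, ← mul_assoc, ← zpow_add_one₀ hq, ← zpow_add₀ hq]
  congr 1
  push_cast
  ring

theorem tripleProductTerm_succ {q : ℝ} (hq₀ : q ≠ 0) (hq : |q| < 1) (n : ℕ) (j : ℤ) :
    tripleProductTerm q (n + 1) j = (1 + (q ^ (2 * n + 1)) ^ 2) * tripleProductTerm q n j
      + q ^ (2 * n + 1) * (tripleProductTerm q n (j - 1) + tripleProductTerm q n (j + 1)) := by
  have hp₀ : q ^ 2 ≠ 0 := pow_ne_zero 2 hq₀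
  have hrec := qPochhammerInv_eq_mul_add_one
    (⟨by positivity, (sq_lt_one_iff_abs_lt_one q).2 hq⟩ : q ^ 2 ∈ Ioo (0 : ℝ) 1)
  have hplus : qPochhammerInv (q ^ 2) (n + j)
      = (1 - (q ^ 2) ^ n * q ^ 2 * (q ^ 2) ^ j) * qPochhammerInv (q ^ 2) (n + 1 + j) := by
    rw [hrec, add_right_comm, zpow_add₀ hp₀, zpow_add_one₀ hp₀, zpow_natCast]
  have hminus : qPochhammerInv (q ^ 2) (n - j)
      = (1 - (q ^ 2) ^ n * q ^ 2 / (q ^ 2) ^ j) * qPochhammerInv (q ^ 2) (n + 1 - j) := by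
    rw [hrec, sub_add_eq_add_sub, zpow_sub₀ hp₀, zpow_add_one₀ hp₀, zpow_natCast]
  have hplus' : qPochhammerInv (q ^ 2) (n + (j - 1))
      = (1 - (q ^ 2) ^ n * (q ^ 2) ^ j) * qPochhammerInv (q ^ 2) (n + j) := by
    rw [hrec, ← add_sub_assoc, sub_add_cancel, zpow_add₀ hp₀, zpow_natCast]
  have hminus' : qPochhammerInv (q ^ 2) (n - (j + 1))
      = (1 - (q ^ 2) ^ n / (q ^ 2) ^ j) * qPochhammerInv (q ^ 2) (n - j) := by
    rw [hrec, ← sub_sub, sub_add_cancel, zpow_sub₀ hp₀, zpow_natCast]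
  simp only [tripleProductTerm]
  rw [hplus', hminus', sub_sub_eq_add_sub _ j 1, add_left_comm (n : ℤ) j 1,
    pow_natAbs_sub_one_sq hq₀, pow_natAbs_add_one_sq hq₀, Nat.cast_succ, mul_add_one 2 n,
    qPochhammer_succ, qPochhammer_succ, add_comm j, hplus, hminus]
  have ht : (q ^ 2) ^ j ≠ 0 := zpow_ne_zero j hp₀
  field_simp
  ring

theorem hasSum_tripleProductTerm {q : ℝ} (hq₀ : q ≠ 0) (hq : |q| < 1) (n : ℕ) :
    HasSum (tripleProductTerm q n) (∏ k ∈ Finset.range n, (1 + q ^ (2 * k + 1)) ^ 2) := by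
  induction n with
  | zero =>
    have hzero (j : ℤ) (hj : j ≠ 0) : tripleProductTerm q 0 j = 0 := by
      rcases lt_or_gt_of_ne hj with hj | hj
      · simp [tripleProductTerm, qPochhammerInv_of_neg _ hj]
      · simp [tripleProductTerm, qPochhammerInv_of_neg _ (neg_neg_of_pos hj)]
    have hone : tripleProductTerm q 0 0 = 1 := by
      simp [tripleProductTerm, qPochhammer, qPochhammerInv]
    simpa only [Finset.prod_range_zero, hone] using hasSum_single 0 hzero
  | succ n ih =>
    set P := ∏ k ∈ Finset.range n, (1 + q ^ (2 * k + 1)) ^ 2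
    have hsub : HasSum (fun j => tripleProductTerm q n (j - 1)) P :=
      (Equiv.hasSum_iff (Equiv.subRight (1 : ℤ))).2 ih
    have hadd : HasSum (fun j => tripleProductTerm q n (j + 1)) P :=
      (Equiv.hasSum_iff (Equiv.addRight (1 : ℤ))).2 ih
    have hP : P * (1 + q ^ (2 * n + 1)) ^ 2
        = (1 + (q ^ (2 * n + 1)) ^ 2) * P + q ^ (2 * n + 1) * (P + P) := by ring
    rw [funext (tripleProductTerm_succ hq₀ hq n), Finset.prod_range_succ, hP]
    exact (ih.mul_left _).add ((hsub.add hadd).mul_left _)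

theorem tendsto_tripleProductTerm {q : ℝ} (hq : q ^ 2 ∈ Ioo (0 : ℝ) 1) (j : ℤ) :
    Tendsto (fun n => tripleProductTerm q n j) atTop
      (𝓝 (q ^ j.natAbs ^ 2 * (eulerFunction (q ^ 2))⁻¹)) := by
  have hplus : Tendsto (fun n : ℕ => (n : ℤ) + j) atTop atTop :=
    tendsto_atTop_add_const_right _ _ tendsto_natCast_atTop_atTop
  have hminus : Tendsto (fun n : ℕ => (n : ℤ) - j) atTop atTop :=
    tendsto_atTop_add_const_right _ _ tendsto_natCast_atTop_atTop
  have hdouble : Tendsto (fun n : ℕ => 2 * n) atTop atTop :=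
    tendsto_id.const_mul_atTop' two_pos
  have hlim := (((tendsto_qPochhammer (abs_lt_one_of_mem_Ioo hq)).comp hdouble).const_mul
    (q ^ j.natAbs ^ 2)).mul
      (((tendsto_qPochhammerInv hq).comp hplus).mul ((tendsto_qPochhammerInv hq).comp hminus))
  rwa [mul_assoc, mul_inv_cancel_left₀ (eulerFunction_pos hq).ne'] at hlim

theorem norm_tripleProductTerm_le {q : ℝ} (hq : q ^ 2 ∈ Ioo (0 : ℝ) 1) (n : ℕ) (j : ℤ) :
    ‖tripleProductTerm q n j‖
      ≤ ‖q ^ j.natAbs ^ 2‖ * ((eulerFunction (q ^ 2))⁻¹ * (eulerFunction (q ^ 2))⁻¹) := by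
  have hpos := qPochhammer_pos hq (2 * n)
  have hinv := inv_pos.2 (eulerFunction_pos hq)
  rw [tripleProductTerm, norm_mul, norm_mul, norm_mul]
  refine mul_le_mul (mul_le_of_le_one_right (norm_nonneg _) ?_)
    (mul_le_mul (abs_qPochhammerInv_le hq _) (abs_qPochhammerInv_le hq _) (norm_nonneg _) hinv.le)
    (by positivity) (norm_nonneg _)
  exact (Real.norm_of_nonneg hpos.le).trans_le (qPochhammer_le_one hq _)

theorem summable_pow_two_mul_add_one {q : ℝ} (hq : |q| < 1) :
    Summable fun k : ℕ => q ^ (2 * k + 1) :=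
  (summable_geometric_of_abs_lt_one hq).comp_injective fun a b h => by omega

theorem theta_eq_eulerFunction_mul_tprod {q : ℝ} (hq : |q| < 1) :
    theta q = eulerFunction (q ^ 2) * (∏' k : ℕ, (1 + q ^ (2 * k + 1))) ^ 2 := by
  rcases eq_or_ne q 0 with rfl | hq₀
  · simp [theta_zero, eulerFunction]
  have hsq : q ^ 2 ∈ Ioo (0 : ℝ) 1 := ⟨by positivity, (sq_lt_one_iff_abs_lt_one q).2 hq⟩
  have hprod : Tendsto (fun n : ℕ => ∏ k ∈ Finset.range n, (1 + q ^ (2 * k + 1)) ^ 2) atTop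
      (𝓝 ((∏' k : ℕ, (1 + q ^ (2 * k + 1))) ^ 2)) := by
    simp only [Finset.prod_pow]
    exact ((Real.multipliable_one_add_of_summable
      (summable_pow_two_mul_add_one hq)).hasProd.tendsto_prod_nat).pow 2
  have hsum := tendsto_tsum_of_dominated_convergence
    ((summable_norm_theta (q := q) hq).mul_right _) (tendsto_tripleProductTerm hsq)
    (Eventually.of_forall (norm_tripleProductTerm_le hsq))
  simp only [(hasSum_tripleProductTerm hq₀ hq _).tsum_eq] at hsum
  rw [tendsto_nhds_unique hprod hsum, tsum_mul_right, ← theta, mul_left_comm,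
    mul_inv_cancel₀ (eulerFunction_pos hsq).ne', mul_one]

theorem theta_pos {q : ℝ} (hq : |q| < 1) : 0 < theta q := by
  rcases eq_or_ne q 0 with rfl | hq₀
  · simp [theta_zero]
  have hsq : q ^ 2 ∈ Ioo (0 : ℝ) 1 := ⟨by positivity, (sq_lt_one_iff_abs_lt_one q).2 hq⟩
  have hodd : 0 < ∏' k : ℕ, (1 + q ^ (2 * k + 1)) :=
    tprod_one_add_pos (summable_pow_two_mul_add_one hq) fun k => by
      have habs : |q ^ (2 * k + 1)| < 1 := by
        rw [abs_pow]
        exact pow_lt_one₀ (abs_nonneg q) hq (Nat.succ_ne_zero _)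
      linarith [(abs_lt.1 habs).1]
  rw [theta_eq_eulerFunction_mul_tprod hq]
  exact mul_pos (eulerFunction_pos hsq) (pow_pos hodd 2)

theorem theta_neg_mul_eulerFunction_sq {q : ℝ} (hq : |q| < 1) :
    theta (-q) * eulerFunction (q ^ 2) = eulerFunction q ^ 2 := by
  have hsplit : (∏' k : ℕ, (1 + (-q) ^ (2 * k + 1))) * eulerFunction (q ^ 2)
      = eulerFunction q := by
    have hodd : (fun k : ℕ => 1 + (-q) ^ (2 * k + 1)) = fun k => 1 - q ^ (2 * k + 1) := by
      funext k
      rw [Odd.neg_pow ⟨k, rfl⟩, sub_eq_add_neg]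
    have heven : (fun k : ℕ => 1 - (q ^ 2) ^ (k + 1)) = fun k => 1 - q ^ (2 * k + 1 + 1) := by
      funext k
      rw [← pow_mul, mul_add_one]
    have hoddMult := Real.multipliable_one_add_of_summable
      (summable_pow_two_mul_add_one (q := -q) (by rwa [abs_neg]))
    have hevenMult := multipliable_one_sub_pow_succ (p := q ^ 2)
      (by rw [abs_pow]; exact pow_lt_one₀ (abs_nonneg q) hq two_ne_zero)
    rw [hodd] at hoddMult ⊢
    rw [heven] at hevenMult
    rw [eulerFunction, heven]
    exact tprod_even_mul_odd (f := fun n : ℕ => 1 - q ^ (n + 1)) hoddMult hevenMult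
  rw [theta_eq_eulerFunction_mul_tprod (by rwa [abs_neg]), neg_sq, ← hsplit]
  ring

end TripleProduct

section ThetaModulus

/-- Repeated squaring drives every point of `(0, 1)` to `0`, so a function invariant under squaring
equals its limit at `0`. -/
theorem eq_of_forall_sq_eq_of_tendsto {X : Type*} [TopologicalSpace X] [T2Space X] {f : ℝ → X}
    {l : X} (hf : ∀ q ∈ Ioo (0 : ℝ) 1, f (q ^ 2) = f q) (hl : Tendsto f (𝓝[>] 0) (𝓝 l)) {q : ℝ}
    (hq : q ∈ Ioo (0 : ℝ) 1) : f q = l := by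
  have hmem (n : ℕ) : q ^ 2 ^ n ∈ Ioo (0 : ℝ) 1 :=
    ⟨pow_pos hq.1 _, pow_lt_one₀ hq.1.le hq.2 (by positivity)⟩
  have hconst (n : ℕ) : f (q ^ 2 ^ n) = f q := by
    induction n with
    | zero => rw [pow_zero, pow_one]
    | succ n ih => rw [pow_succ, pow_mul, hf _ (hmem n), ih]
  have hzero : Tendsto (fun n : ℕ => q ^ 2 ^ n) atTop (𝓝[>] 0) :=
    tendsto_nhdsWithin_iff.2
      ⟨(tendsto_pow_atTop_nhds_zero_of_lt_one hq.1.le hq.2).comp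
        (tendsto_pow_atTop_atTop_of_one_lt one_lt_two), Eventually.of_forall fun n => (hmem n).1⟩
  exact tendsto_nhds_unique (tendsto_const_nhds.congr fun n => (hconst n).symm) (hl.comp hzero)

/-- The difference `θ₃⁴ - θ₄⁴` of fourth powers of theta constants of nome `q`; by Jacobi's
identity it is `θ₂⁴`. -/
noncomputable def thetaQuarticDiff (q : ℝ) : ℝ := theta q ^ 4 - theta (-q) ^ 4

/-- The complementary elliptic modulus `θ₄² / θ₃²` as a function of the nome `q`. -/
noncomputable def thetaModulus (q : ℝ) : ℝ := theta (-q) ^ 2 / theta q ^ 2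

theorem tendsto_theta_neg_zero : Tendsto (fun q : ℝ => theta (-q)) (𝓝 0) (𝓝 1) :=
  tendsto_theta_zero.comp (by simpa using (continuous_neg (G := ℝ)).tendsto 0)

theorem theta_neg_pos {q : ℝ} (hq : q ∈ Ioo (0 : ℝ) 1) : 0 < theta (-q) :=
  theta_pos (by rw [abs_neg]; exact abs_lt_one_of_mem_Ioo hq)

theorem theta_neg_lt_theta {q : ℝ} (hq : q ∈ Ioo (0 : ℝ) 1) : theta (-q) < theta q := by
  have habs := abs_lt_one_of_mem_Ioo hq
  have hsummable (p : ℝ) (hp : |p| < 1) : Summable fun n : ℤ => p ^ n.natAbs ^ 2 :=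
    (summable_norm_theta (𝕜 := ℝ) (q := p) hp).of_norm
  refine Summable.tsum_lt_tsum (i := 1) (fun n => ?_) ?_
    (hsummable (-q) (by rwa [abs_neg])) (hsummable q habs)
  · calc (-q) ^ n.natAbs ^ 2 ≤ |(-q) ^ n.natAbs ^ 2| := le_abs_self _
      _ = q ^ n.natAbs ^ 2 := by rw [abs_pow, abs_neg, abs_of_pos hq.1]
  · simpa using hq.1

theorem thetaQuarticDiff_pos {q : ℝ} (hq : q ∈ Ioo (0 : ℝ) 1) : 0 < thetaQuarticDiff q :=
  sub_pos.2 (pow_lt_pow_left₀ (theta_neg_lt_theta hq) (theta_neg_pos hq).le four_ne_zero)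

theorem thetaModulus_mem_Ioo {q : ℝ} (hq : q ∈ Ioo (0 : ℝ) 1) :
    thetaModulus q ∈ Ioo (0 : ℝ) 1 := by
  have hpos := theta_neg_pos hq
  have hlt := theta_neg_lt_theta hq
  exact ⟨div_pos (pow_pos hpos 2) (pow_pos (hpos.trans hlt) 2),
    (div_lt_one (pow_pos (hpos.trans hlt) 2)).2 (pow_lt_pow_left₀ hlt hpos.le two_ne_zero)⟩

theorem theta_sq_sq {q : ℝ} (hq : |q| < 1) :
    theta (q ^ 2) ^ 2 = (theta q ^ 2 + theta (-q) ^ 2) / 2 := by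
  linarith [theta_sq_add_theta_neg_sq (q := q) hq]

theorem thetaQuarticDiff_sq {q : ℝ} (hq : |q| < 1) :
    thetaQuarticDiff (q ^ 2) = (theta q ^ 2 - theta (-q) ^ 2) ^ 2 / 4 := by
  have hsq := theta_sq_sq hq
  have hneg := theta_mul_theta_neg (q := q) hq
  calc thetaQuarticDiff (q ^ 2) = (theta (q ^ 2) ^ 2) ^ 2 - (theta (-q ^ 2) ^ 2) ^ 2 := by
        rw [thetaQuarticDiff]; ring
    _ = (theta q ^ 2 - theta (-q) ^ 2) ^ 2 / 4 := by rw [hsq, ← hneg]; ring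

theorem thetaModulus_sq_sq_mul {q : ℝ} (hq : |q| < 1) :
    thetaModulus (q ^ 2) ^ 2 * (1 + thetaModulus q) ^ 2 = 4 * thetaModulus q := by
  have hpos := theta_pos hq
  have hnegpos : 0 < theta (-q) := theta_pos (by rwa [abs_neg])
  simp only [thetaModulus]
  rw [theta_sq_sq hq, ← theta_mul_theta_neg (q := q) hq]
  field_simp
  norm_num

theorem contDiffAt_theta_neg {q : ℝ} (hq : |q| < 1) :
    ContDiffAt ℝ 1 (fun x : ℝ => theta (-x)) q :=
  ContDiffAt.comp (g := theta) q (contDiffAt_theta (by rwa [abs_neg])) contDiffAt_id.neg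

theorem contDiffAt_thetaModulus {q : ℝ} (hq : |q| < 1) : ContDiffAt ℝ 1 thetaModulus q :=
  ((contDiffAt_theta_neg hq).pow 2).div ((contDiffAt_theta hq).pow 2)
    (pow_pos (theta_pos hq) 2).ne'

theorem differentiableAt_thetaModulus {q : ℝ} (hq : |q| < 1) :
    DifferentiableAt ℝ thetaModulus q :=
  (contDiffAt_thetaModulus hq).differentiableAt one_ne_zero

theorem hasDerivAt_theta_neg_zero : HasDerivAt (fun x : ℝ => theta (-x)) (-2) 0 := by
  have h : HasDerivAt theta 2 (-0 : ℝ) := by simpa only [neg_zero] using hasDerivAt_theta_zero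
  exact (h.comp 0 (hasDerivAt_neg 0)).congr_deriv (by norm_num)

theorem hasDerivAt_thetaModulus_zero : HasDerivAt thetaModulus (-8) 0 := by
  have hdiv := (hasDerivAt_theta_neg_zero.pow 2).div (hasDerivAt_theta_zero.pow 2)
    (by simp [theta_zero])
  exact hdiv.congr_deriv (by simp [theta_zero]; norm_num)

theorem tendsto_deriv_thetaModulus_zero : Tendsto (deriv thetaModulus) (𝓝 0) (𝓝 (-8)) := by
  have hcont := ((contDiffAt_thetaModulus (q := 0) (by simp)).continuousAt_fderiv
    one_ne_zero).clm_apply (continuousAt_const (y := (1 : ℝ)))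
  simpa only [ContinuousAt, fderiv_apply_one_eq_deriv, hasDerivAt_thetaModulus_zero.deriv]
    using hcont

theorem tendsto_thetaModulus_zero : Tendsto thetaModulus (𝓝 0) (𝓝 1) := by
  simpa [ContinuousAt, thetaModulus, theta_zero] using
    hasDerivAt_thetaModulus_zero.continuousAt

theorem tendsto_thetaQuarticDiff_div_self :
    Tendsto (fun q => thetaQuarticDiff q / q) (𝓝[>] 0) (𝓝 16) := by
  have hderiv : HasDerivAt thetaQuarticDiff 16 0 :=
    ((hasDerivAt_theta_zero.pow 4).sub (hasDerivAt_theta_neg_zero.pow 4)).congr_deriv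
      (by simp [theta_zero]; norm_num)
  refine (hderiv.tendsto_slope.mono_left (nhdsWithin_mono 0 fun q hq => ne_of_gt hq)).congr
    fun q => ?_
  simp [slope_def_field, thetaQuarticDiff, theta_zero]

/-- The logarithmic derivative in `q` of Landen's transformation of the modulus. -/
theorem deriv_thetaModulus_sq_mul {q : ℝ} (hq : q ∈ Ioo (0 : ℝ) 1) :
    4 * q * deriv thetaModulus (q ^ 2) * (1 + thetaModulus q) * thetaModulus q
      = thetaModulus (q ^ 2) * (1 - thetaModulus q) * deriv thetaModulus q := by
  have habs := abs_lt_one_of_mem_Ioo hq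
  have hk := (differentiableAt_thetaModulus habs).hasDerivAt
  have hksq : HasDerivAt (fun x => thetaModulus (x ^ 2))
      (deriv thetaModulus (q ^ 2) * (2 * q)) q := by
    have hpow : HasDerivAt (fun x : ℝ => x ^ 2) (2 * q) q := by simpa using hasDerivAt_pow 2 q
    exact HasDerivAt.comp (h₂ := thetaModulus) (h := fun x : ℝ => x ^ 2) q
      (differentiableAt_thetaModulus
        (abs_lt_one_of_mem_Ioo (sq_mem_Ioo_zero_one hq))).hasDerivAt hpow
  have hleft := (hksq.pow 2).mul ((hk.const_add 1).pow 2)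
  have hright := hk.const_mul 4
  have heq := hleft.unique (hright.congr_of_eventuallyEq (by
    filter_upwards [Ioo_mem_nhds hq.1 hq.2] with x hx
    exact thetaModulus_sq_sq_mul (abs_lt_one_of_mem_Ioo hx)))
  have hlanden := thetaModulus_sq_sq_mul habs
  simp only [Pi.pow_apply, Nat.cast_ofNat, Nat.add_one_sub_one, pow_one] at heq
  linear_combination (thetaModulus (q ^ 2) * (1 + thetaModulus q) / 4) * heq
    - (q * deriv thetaModulus (q ^ 2) * (1 + thetaModulus q)
      + thetaModulus (q ^ 2) * deriv thetaModulus q / 2) * hlanden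

theorem thetaQuarticDiff_sq_mul {q : ℝ} (hq : q ∈ Ioo (0 : ℝ) 1) :
    4 * thetaQuarticDiff (q ^ 2) * (1 + thetaModulus q)
      = thetaQuarticDiff q * (1 - thetaModulus q) := by
  have hpos := theta_pos (abs_lt_one_of_mem_Ioo hq)
  rw [thetaQuarticDiff_sq (abs_lt_one_of_mem_Ioo hq), thetaQuarticDiff, thetaModulus]
  field_simp
  ring

theorem deriv_thetaModulus {q : ℝ} (hq : q ∈ Ioo (0 : ℝ) 1) :
    deriv thetaModulus q = -(thetaModulus q * thetaQuarticDiff q / (2 * q)) := by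
  have hinvariant (x : ℝ) (hx : x ∈ Ioo (0 : ℝ) 1) :
      deriv thetaModulus (x ^ 2) / thetaModulus (x ^ 2) / (thetaQuarticDiff (x ^ 2) / x ^ 2)
        = deriv thetaModulus x / thetaModulus x / (thetaQuarticDiff x / x) := by
    have hx₀ := hx.1
    have hk := thetaModulus_mem_Ioo hx
    have hk' := (thetaModulus_mem_Ioo (sq_mem_Ioo_zero_one hx)).1
    have hD := thetaQuarticDiff_pos hx
    have hD' := thetaQuarticDiff_pos (sq_mem_Ioo_zero_one hx)
    have hfactor : 4 * (1 + thetaModulus x) * (1 - thetaModulus x) ≠ 0 :=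
      (mul_pos (by linarith [hk.1]) (sub_pos.2 hk.2)).ne'
    have hk₀ := hk.1
    field_simp
    apply mul_left_cancel₀ hfactor
    linear_combination (thetaQuarticDiff x * (1 - thetaModulus x)) * deriv_thetaModulus_sq_mul hx
      - (thetaModulus (x ^ 2) * (1 - thetaModulus x) * deriv thetaModulus x) *
        thetaQuarticDiff_sq_mul hx
  have hlim : Tendsto (fun x => deriv thetaModulus x / thetaModulus x / (thetaQuarticDiff x / x))
      (𝓝[>] 0) (𝓝 (-8 / 1 / 16)) :=
    ((tendsto_deriv_thetaModulus_zero.div tendsto_thetaModulus_zero one_ne_zero).mono_left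
      nhdsWithin_le_nhds).div tendsto_thetaQuarticDiff_div_self (by norm_num)
  have hvalue := eq_of_forall_sq_eq_of_tendsto hinvariant hlim hq
  have hq₀ := hq.1
  have hk := (thetaModulus_mem_Ioo hq).1
  have hD := thetaQuarticDiff_pos hq
  field_simp at hvalue ⊢
  linarith

theorem agmIntegral_theta_sq {q : ℝ} (hq : q ∈ Ioo (0 : ℝ) 1) :
    agmIntegral (theta q ^ 2) (theta (-q) ^ 2) = ENNReal.ofReal (π / 2) := by
  have hbounds (x : ℝ) (hx : x ∈ Ioo (0 : ℝ) 1) :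
      0 < theta (-x) ^ 2 ∧ theta (-x) ^ 2 < theta x ^ 2 :=
    ⟨pow_pos (theta_neg_pos hx) 2,
      pow_lt_pow_left₀ (theta_neg_lt_theta hx) (theta_neg_pos hx).le two_ne_zero⟩
  refine eq_of_forall_sq_eq_of_tendsto
    (f := fun x => agmIntegral (theta x ^ 2) (theta (-x) ^ 2)) (fun x hx => ?_) ?_ hq
  · have hsqrt : √(theta x ^ 2 * theta (-x) ^ 2) = theta (-x ^ 2) ^ 2 := by
      rw [← mul_pow, theta_mul_theta_neg (q := x) (abs_lt_one_of_mem_Ioo hx),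
        Real.sqrt_sq (sq_nonneg _)]
    rw [agmIntegral_landen (hbounds x hx).1 (hbounds x hx).2, hsqrt,
      theta_sq_sq (abs_lt_one_of_mem_Ioo hx)]
  · have hlim {g : ℝ → ℝ} (hg : Tendsto g (𝓝 0) (𝓝 1)) :
        Tendsto (fun x => ENNReal.ofReal (π / (2 * g x ^ 2))) (𝓝[>] 0)
          (𝓝 (ENNReal.ofReal (π / 2))) := by
      refine ENNReal.tendsto_ofReal (Tendsto.mono_left ?_ nhdsWithin_le_nhds)
      simpa [Pi.div_def] using
        (tendsto_const_nhds (x := π)).div ((hg.pow 2).const_mul 2) (by norm_num)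
    refine tendsto_of_tendsto_of_tendsto_of_le_of_le' (hlim tendsto_theta_zero)
      (hlim tendsto_theta_neg_zero) ?_ ?_ <;>
    filter_upwards [Ioo_mem_nhdsGT one_pos] with x hx
    · exact le_agmIntegral (hbounds x hx).1 (hbounds x hx).2
    · exact agmIntegral_le (hbounds x hx).1 (hbounds x hx).2

theorem agmIntegral_thetaModulus {q : ℝ} (hq : q ∈ Ioo (0 : ℝ) 1) :
    agmIntegral 1 (thetaModulus q) = ENNReal.ofReal (π / 2 * theta q ^ 2) := by
  have hpos := pow_pos (theta_pos (abs_lt_one_of_mem_Ioo hq)) 2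
  rw [agmIntegral_mul (thetaModulus_mem_Ioo hq).2.le hpos, mul_one, thetaModulus,
    mul_div_cancel₀ _ hpos.ne', agmIntegral_theta_sq hq, ← ENNReal.ofReal_mul hpos.le, mul_comm]

end ThetaModulus

section Nome

/-- The nome `exp (π i τ)` at the point `τ = y i` of the imaginary axis. -/
noncomputable def nome (y : ℝ) : ℝ := Real.exp (-(π * y))

theorem nome_mem_Ioo {y : ℝ} (hy : 0 < y) : nome y ∈ Ioo (0 : ℝ) 1 :=
  ⟨Real.exp_pos _, Real.exp_lt_one_iff.2 (neg_lt_zero.2 (mul_pos pi_pos hy))⟩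

theorem nome_nat_mul (n : ℕ) (y : ℝ) : nome (n * y) = nome y ^ n := by
  rw [nome, nome, ← Real.exp_nat_mul]
  ring_nf

theorem hasDerivAt_thetaModulus_nome {y : ℝ} (hy : 0 < y) :
    HasDerivAt (fun y => thetaModulus (nome y))
      (π / 2 * thetaModulus (nome y) * thetaQuarticDiff (nome y)) y := by
  have hq := nome_mem_Ioo hy
  have hnome : HasDerivAt nome (nome y * -π) y :=
    ((hasDerivAt_id y).const_mul π).neg.exp.congr_deriv (by simp [nome])
  have hk := (differentiableAt_thetaModulus (abs_lt_one_of_mem_Ioo hq)).hasDerivAt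
  refine (hk.comp y hnome).congr_deriv ?_
  have hq₀ := hq.1.ne'
  rw [deriv_thetaModulus hq]
  field_simp

theorem continuousOn_thetaModulus_nome :
    ContinuousOn (fun y => thetaModulus (nome y)) (Ioi 0) := fun _ hy =>
  (hasDerivAt_thetaModulus_nome hy).continuousAt.continuousWithinAt

theorem strictMonoOn_thetaModulus_nome :
    StrictMonoOn (fun y => thetaModulus (nome y)) (Ioi 0) := by
  refine strictMonoOn_of_deriv_pos (convex_Ioi 0) continuousOn_thetaModulus_nome fun y hy => ?_
  rw [interior_Ioi] at hy
  rw [(hasDerivAt_thetaModulus_nome hy).deriv]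
  exact mul_pos (mul_pos (by positivity) (thetaModulus_mem_Ioo (nome_mem_Ioo hy)).1)
    (thetaQuarticDiff_pos (nome_mem_Ioo hy))

theorem thetaModulus_le_sq {q : ℝ} (hq : q ∈ Ioo (0 : ℝ) 1) :
    thetaModulus q ≤ thetaModulus (q ^ 2) ^ 2 := by
  obtain ⟨hpos, hlt⟩ := thetaModulus_mem_Ioo hq
  have hlanden := thetaModulus_sq_sq_mul (abs_lt_one_of_mem_Ioo hq)
  have hfour : (1 + thetaModulus q) ^ 2 ≤ 4 := by nlinarith
  nlinarith [sq_nonneg (thetaModulus (q ^ 2))]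

theorem thetaModulus_nome_div_two_pow_le {y : ℝ} (hy : 0 < y) (n : ℕ) :
    thetaModulus (nome (y / 2 ^ n)) ≤ thetaModulus (nome y) ^ 2 ^ n := by
  induction n with
  | zero => simp
  | succ n ih =>
    have hnome : nome (y / 2 ^ n) = nome (y / 2 ^ (n + 1)) ^ 2 := by
      rw [← nome_nat_mul, pow_succ]
      congr 1
      push_cast
      field_simp
    calc thetaModulus (nome (y / 2 ^ (n + 1))) ≤ thetaModulus (nome (y / 2 ^ n)) ^ 2 := by
          rw [hnome]
          exact thetaModulus_le_sq (nome_mem_Ioo (by positivity))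
      _ ≤ (thetaModulus (nome y) ^ 2 ^ n) ^ 2 :=
          pow_le_pow_left₀ (thetaModulus_mem_Ioo (nome_mem_Ioo (by positivity))).1.le ih 2
      _ = thetaModulus (nome y) ^ 2 ^ (n + 1) := by rw [← pow_mul, ← pow_succ]

theorem exists_thetaModulus_nome_lt {c : ℝ} (hc : 0 < c) :
    ∃ y, 0 < y ∧ thetaModulus (nome y) < c := by
  obtain ⟨hpos, hlt⟩ := thetaModulus_mem_Ioo (nome_mem_Ioo one_pos)
  obtain ⟨m, hm⟩ := exists_pow_lt_of_lt_one hc hlt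
  refine ⟨1 / 2 ^ m, by positivity, (thetaModulus_nome_div_two_pow_le one_pos m).trans_lt ?_⟩
  exact (pow_le_pow_of_le_one hpos.le hlt.le m.lt_two_pow_self.le).trans_lt hm

theorem tendsto_nome_atTop : Tendsto nome atTop (𝓝 0) :=
  Real.tendsto_exp_neg_atTop_nhds_zero.comp (tendsto_id.const_mul_atTop pi_pos)

theorem exists_lt_thetaModulus_nome {c : ℝ} (hc : c < 1) :
    ∃ y, 0 < y ∧ c < thetaModulus (nome y) :=
  ((eventually_gt_atTop 0).and
    ((tendsto_thetaModulus_zero.comp tendsto_nome_atTop).eventually_const_lt hc)).exists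

theorem image_thetaModulus_nome : (fun y => thetaModulus (nome y)) '' Ioi 0 = Ioo 0 1 := by
  refine Subset.antisymm (image_subset_iff.2 fun y hy => thetaModulus_mem_Ioo (nome_mem_Ioo hy))
    fun c hc => ?_
  obtain ⟨y₁, hy₁, hlt⟩ := exists_thetaModulus_nome_lt hc.1
  obtain ⟨y₂, hy₂, hgt⟩ := exists_lt_thetaModulus_nome hc.2
  exact isPreconnected_Ioi.intermediate_value hy₁ hy₂ continuousOn_thetaModulus_nome
    ⟨hlt.le, hgt.le⟩

theorem lintegral_agmIntegral_sq :
    ∫⁻ x in Ioo (0 : ℝ) 1, agmIntegral 1 x ^ 2 = ∫⁻ y in Ioi (0 : ℝ), ENNReal.ofReal (π ^ 3 / 8 *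
      (thetaQuarticDiff (nome y) * (theta (nome y) * theta (-nome y)) ^ 2)) := by
  rw [← image_thetaModulus_nome, lintegral_image_eq_lintegral_deriv_mul_of_monotoneOn
    measurableSet_Ioi (fun y hy => (hasDerivAt_thetaModulus_nome hy).hasDerivWithinAt)
    strictMonoOn_thetaModulus_nome.monotoneOn]
  refine setLIntegral_congr_fun measurableSet_Ioi fun y hy => ?_
  have hq := nome_mem_Ioo hy
  have hpos := theta_pos (abs_lt_one_of_mem_Ioo hq)
  have hderiv : 0 ≤ π / 2 * thetaModulus (nome y) * thetaQuarticDiff (nome y) :=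
    mul_nonneg (mul_nonneg (by positivity) (thetaModulus_mem_Ioo hq).1.le)
      (thetaQuarticDiff_pos hq).le
  rw [agmIntegral_thetaModulus hq, ← ENNReal.ofReal_pow (by positivity),
    ← ENNReal.ofReal_mul hderiv, thetaModulus]
  congr 1
  field_simp
  ring

end Nome

section EtaTheta

theorem thetaQuarticDiff_pow_two {q : ℝ} (hq : |q| < 1) :
    thetaQuarticDiff q ^ 2 = 16 * thetaQuarticDiff (q ^ 2) * theta (q ^ 2) ^ 4 := by
  rw [thetaQuarticDiff_sq hq, show theta (q ^ 2) ^ 4 = (theta (q ^ 2) ^ 2) ^ 2 by ring,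
    theta_sq_sq hq, thetaQuarticDiff]
  ring

/-- The quotient of `(θ₃⁴ - θ₄⁴)(q) * θ₄(q²)²` by the product which it turns out to equal. -/
noncomputable def thetaEulerRatio (q : ℝ) : ℝ :=
  thetaQuarticDiff q * theta (-q ^ 2) ^ 2 / (16 * q * eulerFunction (q ^ 4) ^ 6)

theorem thetaEulerRatio_pos {q : ℝ} (hq : q ∈ Ioo (0 : ℝ) 1) : 0 < thetaEulerRatio q := by
  have hE := eulerFunction_pos (pow_mem_Ioo_zero_one hq four_ne_zero)
  exact div_pos (mul_pos (thetaQuarticDiff_pos hq)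
    (pow_pos (theta_neg_pos (sq_mem_Ioo_zero_one hq)) 2))
    (mul_pos (mul_pos (by norm_num) hq.1) (pow_pos hE 6))

theorem thetaEulerRatio_sq {q : ℝ} (hq : q ∈ Ioo (0 : ℝ) 1) :
    thetaEulerRatio (q ^ 2) = thetaEulerRatio q ^ 2 := by
  have hq₂ := sq_mem_Ioo_zero_one hq
  have hq₄ : q ^ 4 ∈ Ioo (0 : ℝ) 1 := pow_mem_Ioo_zero_one hq four_ne_zero
  have hfour : (q ^ 2) ^ 2 = q ^ 4 := by ring
  have height : (q ^ 2) ^ 4 = (q ^ 4) ^ 2 := by ring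
  have heuler := theta_neg_mul_eulerFunction_sq (abs_lt_one_of_mem_Ioo hq₄)
  have htheta := theta_mul_theta_neg (q := q ^ 2) (abs_lt_one_of_mem_Ioo hq₂)
  have hE₄ := eulerFunction_pos hq₄
  have hE₈ := eulerFunction_pos (sq_mem_Ioo_zero_one hq₄)
  have hq₀ := hq.1
  rw [hfour] at htheta
  rw [thetaEulerRatio, thetaEulerRatio, hfour, height]
  have hnum : (thetaQuarticDiff q * theta (-q ^ 2) ^ 2) ^ 2
      = 16 * thetaQuarticDiff (q ^ 2) * theta (-q ^ 4) ^ 8 := by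
    rw [mul_pow, thetaQuarticDiff_pow_two (abs_lt_one_of_mem_Ioo hq)]
    calc _ = 16 * thetaQuarticDiff (q ^ 2) * (theta (q ^ 2) * theta (-q ^ 2)) ^ 4 := by ring
      _ = _ := by rw [htheta]; ring
  have hden : eulerFunction (q ^ 4) ^ 12
      = theta (-q ^ 4) ^ 6 * eulerFunction ((q ^ 4) ^ 2) ^ 6 := by
    rw [← mul_pow, heuler]
    ring
  rw [div_pow, hnum, div_eq_div_iff (by positivity) (by positivity)]
  linear_combination (256 * q ^ 2 * thetaQuarticDiff (q ^ 2) * theta (-q ^ 4) ^ 2) * hden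

theorem tendsto_thetaEulerRatio : Tendsto thetaEulerRatio (𝓝[>] 0) (𝓝 1) := by
  have hpow (n : ℕ) (hn : n ≠ 0) : Tendsto (fun q : ℝ => q ^ n) (𝓝 0) (𝓝 0) := by
    simpa [hn] using (continuous_pow n).tendsto (0 : ℝ)
  have htheta := (tendsto_theta_neg_zero.comp (hpow 2 two_ne_zero)).pow 2
  have heuler := (tendsto_eulerFunction_zero.comp (hpow 4 four_ne_zero)).pow 6
  have hratio := (htheta.div (heuler.const_mul 16) (by norm_num)).mono_left
    (nhdsWithin_le_nhds (s := Ioi 0))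
  have hlim := tendsto_thetaQuarticDiff_div_self.mul hratio
  norm_num at hlim
  refine hlim.congr fun q => ?_
  simp only [thetaEulerRatio]
  field_simp

theorem thetaEulerRatio_eq_one {q : ℝ} (hq : q ∈ Ioo (0 : ℝ) 1) : thetaEulerRatio q = 1 := by
  have hlim : Tendsto (fun x => Real.log (thetaEulerRatio x) / Real.log x) (𝓝[>] 0) (𝓝 0) :=
    (tendsto_thetaEulerRatio.log one_ne_zero).div_atBot Real.tendsto_log_nhdsGT_zero
  have hquot := eq_of_forall_sq_eq_of_tendsto (fun x hx => by
    rw [thetaEulerRatio_sq hx, Real.log_pow, Real.log_pow, mul_div_mul_left _ _ (by norm_num)])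
    hlim hq
  have hlog : Real.log (thetaEulerRatio q) = 0 :=
    (div_eq_zero_iff.1 hquot).resolve_right (Real.log_neg hq.1 hq.2).ne
  exact Real.eq_one_of_pos_of_log_eq_zero (thetaEulerRatio_pos hq) hlog

theorem thetaQuarticDiff_mul_theta_mul_theta_neg_sq {q : ℝ} (hq : q ∈ Ioo (0 : ℝ) 1) :
    thetaQuarticDiff q * (theta q * theta (-q)) ^ 2
      = 16 * (q * eulerFunction (q ^ 2) ^ 4 * eulerFunction (q ^ 4) ^ 4) := by
  have hE₄ := eulerFunction_pos (pow_mem_Ioo_zero_one hq four_ne_zero)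
  have hq₀ := hq.1
  have hratio := (div_eq_one_iff_eq (by positivity)).1 (thetaEulerRatio_eq_one hq)
  have heuler : theta (-q ^ 2) * eulerFunction (q ^ 4) = eulerFunction (q ^ 2) ^ 2 := by
    rw [← theta_neg_mul_eulerFunction_sq (abs_lt_one_of_mem_Ioo (sq_mem_Ioo_zero_one hq)),
      ← pow_mul]
  calc thetaQuarticDiff q * (theta q * theta (-q)) ^ 2
      = thetaQuarticDiff q * theta (-q ^ 2) ^ 2 * theta (-q ^ 2) ^ 2 := by
        rw [theta_mul_theta_neg (q := q) (abs_lt_one_of_mem_Ioo hq)]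
        ring
    _ = 16 * q * (theta (-q ^ 2) * eulerFunction (q ^ 4)) ^ 2 * eulerFunction (q ^ 4) ^ 4 := by
        rw [hratio]
        ring
    _ = _ := by
        rw [heuler]
        ring

theorem dedekindEta_ofReal_mul_I {y : ℝ} (hy : 0 < y) :
    dedekindEta (y * I) = (rexp (-(π * y / 12)) * eulerFunction (nome y ^ 2) : ℝ) := by
  have hexp : cexp (2 * π * I * (y * I)) = (nome y ^ 2 : ℝ) := by
    rw [nome, ← Real.exp_nat_mul, Complex.ofReal_exp]
    congr 1
    push_cast
    linear_combination (2 * π * y : ℂ) * I_sq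
  rw [dedekindEta_eq_exp_mul_tprod, hexp, Complex.ofReal_mul, ofReal_eulerFunction
    (abs_lt_one_of_mem_Ioo (sq_mem_Ioo_zero_one (nome_mem_Ioo hy))), Complex.ofReal_exp]
  congr 2
  push_cast
  linear_combination (π * y / 12 : ℂ) * I_sq

theorem etaProduct_ofReal_mul_I {y : ℝ} (hy : 0 < y) :
    etaProduct (y * I) =
      (thetaQuarticDiff (nome y) * (theta (nome y) * theta (-nome y)) ^ 2 / 16 : ℝ) := by
  have hnome : nome (2 * y) ^ 2 = nome y ^ 4 := by
    rw [← Nat.cast_two, nome_nat_mul, ← pow_mul]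
  have hexp : rexp (-(π * y / 12)) ^ 4 * rexp (-(π * (2 * y) / 12)) ^ 4 = nome y := by
    rw [nome, ← Real.exp_nat_mul, ← Real.exp_nat_mul, ← Real.exp_add]
    congr 1
    push_cast
    ring
  have hdouble : 2 * (y * I) = ((2 * y : ℝ) : ℂ) * I := by push_cast; ring
  rw [thetaQuarticDiff_mul_theta_mul_theta_neg_sq (nome_mem_Ioo hy), etaProduct, hdouble,
    dedekindEta_ofReal_mul_I hy, dedekindEta_ofReal_mul_I (by positivity), hnome]
  norm_cast
  rw [← hexp]
  ring

end EtaTheta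

section ComplementaryEllipticK

theorem etaProduct_ofReal_mul_I_re {y : ℝ} (hy : 0 < y) : ((etaProduct (y * I)).re : ℂ) =
    etaProduct (y * I) := by
  rw [etaProduct_ofReal_mul_I hy, ofReal_re]

theorem etaProduct_re_nonneg {y : ℝ} (hy : 0 < y) : 0 ≤ (etaProduct (y * I)).re := by
  rw [etaProduct_ofReal_mul_I hy, ofReal_re]
  have hpos := thetaQuarticDiff_pos (nome_mem_Ioo hy)
  positivity

theorem lintegral_agmIntegral_sq_eq_integral_etaProduct :
    ∫⁻ x in Ioo (0 : ℝ) 1, agmIntegral 1 x ^ 2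
      = ENNReal.ofReal (2 * π ^ 3 * ∫ y in Ioi (0 : ℝ), (etaProduct (y * I)).re) := by
  have hint : IntegrableOn (fun y : ℝ => (etaProduct (y * I)).re) (Ioi 0) :=
    isFrickeForm_etaProduct.integrableOn_imaginary_axis.re
  rw [lintegral_agmIntegral_sq, ← integral_const_mul,
    ofReal_integral_eq_lintegral_ofReal (hint.const_mul _)]
  · refine setLIntegral_congr_fun measurableSet_Ioi fun y hy => ?_
    rw [etaProduct_ofReal_mul_I hy, ofReal_re]
    ring_nf
  · filter_upwards [ae_restrict_mem measurableSet_Ioi] with y hy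
    exact mul_nonneg (by positivity) (etaProduct_re_nonneg hy)

/-- The complementary complete elliptic integral of the first kind `K'(x)`, as a function on the
unit interval. Its infinite value at `x = 0` is replaced by `0`. -/
noncomputable def complementaryEllipticK (x : unitInterval) : ℝ := (agmIntegral 1 x).toReal

theorem measurable_agmIntegral (a : ℝ) : Measurable (agmIntegral a) := by
  have hset : MeasurableSet {p : ℝ × ℝ | p.2 ∈ Ioo p.1 a} :=
    (measurableSet_lt measurable_fst measurable_snd).inter
      (measurableSet_lt measurable_snd measurable_const)
  convert ((measurable_agmDensity a).indicator hset).lintegral_prod_right' (ν := volume) using 1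
  funext b
  rw [agmIntegral, ← lintegral_indicator measurableSet_Ioo]
  rfl

theorem measurable_complementaryEllipticK : Measurable complementaryEllipticK :=
  ((measurable_agmIntegral 1).comp measurable_subtype_coe).ennreal_toReal

theorem lintegral_unitInterval (f : ℝ → ENNReal) :
    ∫⁻ x : unitInterval, f x = ∫⁻ x in Ioo (0 : ℝ) 1, f x := by
  rw [Measure.restrict_congr_set Ioo_ae_eq_Icc]
  exact lintegral_subtype_comap measurableSet_Icc f

theorem ofReal_toReal_agmIntegral {x : ℝ} (hx : x ∈ Ioo (0 : ℝ) 1) :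
    ENNReal.ofReal (agmIntegral 1 x).toReal = agmIntegral 1 x :=
  ENNReal.ofReal_toReal ((agmIntegral_le hx.1 hx.2).trans_lt ENNReal.ofReal_lt_top).ne

theorem lintegral_complementaryEllipticK_sq :
    ∫⁻ x, ENNReal.ofReal (complementaryEllipticK x ^ 2)
      = ENNReal.ofReal (2 * π ^ 3 * ∫ y in Ioi (0 : ℝ), (etaProduct (y * I)).re) := by
  rw [← lintegral_agmIntegral_sq_eq_integral_etaProduct]
  refine (lintegral_unitInterval fun x => ENNReal.ofReal ((agmIntegral 1 x).toReal ^ 2)).trans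
    (setLIntegral_congr_fun measurableSet_Ioo fun x hx => ?_)
  rw [ENNReal.ofReal_pow ENNReal.toReal_nonneg, ofReal_toReal_agmIntegral hx]

theorem memLp_complementaryEllipticK : MemLp complementaryEllipticK 2 := by
  have hmeas := measurable_complementaryEllipticK
  rw [memLp_two_iff_integrable_sq hmeas.aestronglyMeasurable]
  refine ⟨(hmeas.pow_const 2).aestronglyMeasurable, ?_⟩
  rw [hasFiniteIntegral_iff_ofReal (.of_forall fun x => sq_nonneg _),
    lintegral_complementaryEllipticK_sq]
  exact ENNReal.ofReal_lt_top

theorem integral_complementaryEllipticK_sq :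
    ∫ x, complementaryEllipticK x ^ 2
      = 2 * π ^ 3 * ∫ y in Ioi (0 : ℝ), (etaProduct (y * I)).re := by
  rw [integral_eq_lintegral_of_nonneg_ae (.of_forall fun x => sq_nonneg _)
    (measurable_complementaryEllipticK.pow_const 2).aestronglyMeasurable,
    lintegral_complementaryEllipticK_sq, ENNReal.toReal_ofReal]
  exact mul_nonneg (by positivity)
    (setIntegral_nonneg measurableSet_Ioi fun _ hy => etaProduct_re_nonneg hy)

theorem integral_pow_mul_complementaryEllipticK (n : ℕ) :
    ∫ x : unitInterval, (x : ℝ) ^ (2 * n) * complementaryEllipticK x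
      = π ^ 2 / 4 * halfPochRatio n ^ 2 := by
  have hnonneg (x : unitInterval) : 0 ≤ (x : ℝ) ^ (2 * n) * complementaryEllipticK x :=
    mul_nonneg (pow_nonneg x.2.1 _) ENNReal.toReal_nonneg
  have hlintegral :
      ∫⁻ x : unitInterval, ENNReal.ofReal ((x : ℝ) ^ (2 * n) * complementaryEllipticK x)
        = ENNReal.ofReal (π ^ 2 / 4 * halfPochRatio n ^ 2) := by
    rw [← lintegral_pow_mul_agmIntegral]
    refine (lintegral_unitInterval fun x =>
      ENNReal.ofReal (x ^ (2 * n) * (agmIntegral 1 x).toReal)).trans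
      (setLIntegral_congr_fun measurableSet_Ioo fun x hx => ?_)
    rw [ENNReal.ofReal_mul (pow_nonneg hx.1.le _), ofReal_toReal_agmIntegral hx]
  rw [integral_eq_lintegral_of_nonneg_ae (.of_forall hnonneg)
    ((measurable_subtype_coe.pow_const _).mul
      measurable_complementaryEllipticK).aestronglyMeasurable, hlintegral,
    ENNReal.toReal_ofReal (by positivity)]

theorem hasSum_mul_halfPochRatio_pow_six :
    HasSum (fun k : ℕ => (1 + 4 * (k : ℂ)) * (halfPochRatio k : ℂ) ^ 6)
      (32 / π * ∫ y in Ioi (0 : ℝ), etaProduct (y * I)) := by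
  have hreal : HasSum (fun k : ℕ => (1 + 4 * (k : ℝ)) * halfPochRatio k ^ 6)
      (32 / π * ∫ y in Ioi (0 : ℝ), (etaProduct (y * I)).re) := by
    have hterm (k : ℕ) : (1 + 4 * (k : ℝ)) * halfPochRatio k ^ 6
        = (4 * k + 1) * halfPochRatio k ^ 6 * (π ^ 2 / 4) ^ 2 * (16 / π ^ 4) := by
      field_simp
      ring
    have hconst : 32 / π = 2 * π ^ 3 * (16 / π ^ 4) := by
      field_simp
      norm_num
    rw [funext hterm, hconst, mul_right_comm, ← integral_complementaryEllipticK_sq]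
    exact (hasSum_halfPochRatio_pow_six memLp_complementaryEllipticK
      integral_pow_mul_complementaryEllipticK).mul_right _
  have hintegral : ∫ y in Ioi (0 : ℝ), etaProduct (y * I)
      = (∫ y in Ioi (0 : ℝ), (etaProduct (y * I)).re : ℝ) := by
    rw [← integral_complex_ofReal]
    exact setIntegral_congr_fun measurableSet_Ioi fun y hy => (etaProduct_ofReal_mul_I_re hy).symm
  rw [hintegral]
  exact_mod_cast Complex.hasSum_ofReal.2 hreal

theorem poch_half_div_factorial (k : ℕ) :
    poch (1 / 2) k / (Nat.factorial k : ℂ) = halfPochRatio k := by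
  rw [poch, halfPochRatio, ← Finset.prod_range_add_one_eq_factorial]
  push_cast
  rw [← Finset.prod_div_distrib]
  simp only [add_comm (1 : ℂ)]

end ComplementaryEllipticK

/-- `₇F₆(1/2,5/4,1/2,…,1/2; 1/4,1,…,1; 1) = ∑ₖ (1+4k)((1/2)ₖ/k!)⁶` equals `32i/π`
times the integral of `τ·η(τ)⁴η(2τ)⁴ dτ` along the straight segment from `(1+i)/2` to
`(−1+i)/2` (parametrized as `τ = t + i/2`, giving the minus sign below).  The
eta-product is `f_{8.4.a.a}(τ/2)`. -/
theorem statement13 :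
    (∑' k : ℕ, (1 + 4 * (k : ℂ)) * (poch (1/2) k / (Nat.factorial k : ℂ)) ^ 6)
      = -(32 * Complex.I / (Real.pi : ℂ)) * ∫ t in (-1/2 : ℝ)..(1/2 : ℝ),
          ((t : ℂ) + Complex.I / 2)
            * dedekindEta ((t : ℂ) + Complex.I / 2) ^ 4
            * dedekindEta (2 * (t : ℂ) + Complex.I) ^ 4 := by
  have hintegrand (t : ℝ) : ((t : ℂ) + I / 2) * dedekindEta (t + I / 2) ^ 4
      * dedekindEta (2 * t + I) ^ 4 = (t + I / 2) * etaProduct (t + I / 2) := by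
    rw [etaProduct, mul_add 2 (t : ℂ), mul_div_cancel₀ I two_ne_zero, mul_assoc]
  simp only [poch_half_div_factorial, hasSum_mul_halfPochRatio_pow_six.tsum_eq, hintegrand,
    isFrickeForm_etaProduct.integral_segment_eq_integral_imaginary_axis]
  linear_combination (32 / π * ∫ y in Ioi (0 : ℝ), etaProduct (y * I)) * I_sq
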